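/- arXiv:2012.10424 — 9 statements merged into one kernel-verified Lean document; each statement's English description precedes it below -/
import Mathlib

section
/- Let d, p, C be positive integers with p ≤ d, let Σ_W ∈ ℝ^{d×d} be symmetric positive definite, let μ_1, …, μ_C ∈ ℝ^d, and let A ∈ ℝ^{p×d} be a surjective matrix (rank p). Then A Σ_W Aᵀ is symmetric positive definite, and the Fisher discriminant ratio decreases under A: (1/C) ∑_{c=1}^C (A μ_c)ᵀ (A Σ_W Aᵀ)⁻¹ (A μ_c) ≤ (1/C) ∑_{c=1}^C μ_cᵀ Σ_W⁻¹ μ_c. -/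
open Matrix

/-- For a positive definite within-class covariance `Sw`, class means `μ c`,
and a surjective matrix `A : ℝ^{p×d}` (rank `p`), the matrix `A Sw Aᵀ` is positive definite
and the Fisher discriminant ratio decreases under `A`. -/
theorem fisher_ratio_decreases_under_linear_map
    (d p C : ℕ) (hd : 0 < d) (hp : 0 < p) (hC : 0 < C) (hpd : p ≤ d)
    (Sw : Matrix (Fin d) (Fin d) ℝ) (hSw : Sw.PosDef)
    (μ : Fin C → Fin d → ℝ)
    (A : Matrix (Fin p) (Fin d) ℝ) (hA : Function.Surjective A.mulVec) :
    (A * Sw * Aᵀ).PosDef ∧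
      (1 / C : ℝ) * ∑ c, A.mulVec (μ c) ⬝ᵥ ((A * Sw * Aᵀ)⁻¹).mulVec (A.mulVec (μ c)) ≤
        (1 / C : ℝ) * ∑ c, μ c ⬝ᵥ (Sw⁻¹).mulVec (μ c) := by
  have hpos : (A * Sw * Aᵀ).PosDef := by
    have h := hSw.mul_mul_conjTranspose_same (B := A) (by
      intro x y hxy
      have hxy' : x ᵥ* A = y ᵥ* A := hxy
      apply dotProduct_eq
      intro z
      obtain ⟨w, rfl⟩ := hA z
      rw [dotProduct_mulVec, dotProduct_mulVec, hxy'])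
    rwa [conjTranspose_eq_transpose_of_trivial] at h
  refine ⟨hpos, ?_⟩
  apply mul_le_mul_of_nonneg_left _ (by positivity)
  apply Finset.sum_le_sum
  intro c _
  generalize μ c = x
  have hu1 := (Matrix.isUnit_iff_isUnit_det _).1 hSw.isUnit
  have hu2 := (Matrix.isUnit_iff_isUnit_det _).1 hpos.isUnit
  have hST : Swᵀ = Sw := by
    have := hSw.isHermitian.eq
    rwa [conjTranspose_eq_transpose_of_trivial] at this
  obtain ⟨y, hy⟩ : ∃ y, y = (A * Sw * Aᵀ)⁻¹ *ᵥ (A *ᵥ x) := ⟨_, rfl⟩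
  obtain ⟨v, hv⟩ : ∃ v, v = Sw⁻¹ *ᵥ x := ⟨_, rfl⟩
  rw [← hy, ← hv]
  have hy2 : A *ᵥ (Sw *ᵥ (Aᵀ *ᵥ y)) = A *ᵥ x := by
    rw [mulVec_mulVec, mulVec_mulVec, hy, mulVec_mulVec, Matrix.mul_nonsing_inv _ hu2,
      one_mulVec]
  have hv2 : Sw *ᵥ v = x := by
    rw [hv, mulVec_mulVec, Matrix.mul_nonsing_inv _ hu1, one_mulVec]
  have h0 := hSw.posSemidef.dotProduct_mulVec_nonneg (v - Aᵀ *ᵥ y)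
  have hadj : ∀ z : Fin d → ℝ, (Aᵀ *ᵥ y) ⬝ᵥ z = (A *ᵥ z) ⬝ᵥ y := by
    intro z
    rw [mulVec_transpose, ← dotProduct_mulVec, dotProduct_comm]
  have h1 : v ⬝ᵥ (Sw *ᵥ (Aᵀ *ᵥ y)) = (A *ᵥ x) ⬝ᵥ y := by
    rw [dotProduct_mulVec, ← mulVec_transpose, hST, hv2, dotProduct_comm, hadj]
  rw [star_trivial, mulVec_sub, hv2, sub_dotProduct, dotProduct_sub, dotProduct_sub, hadj, hadj,
    hy2, h1, dotProduct_comm v x] at h0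
  linarith
end

section
/- Let d, p, C be positive integers with p ≤ d, let Σ_W ∈ ℝ^{d×d} be symmetric positive definite, let μ_1, …, μ_C ∈ ℝ^d, and let A ∈ ℝ^{p×d} be a surjective matrix (rank p). Then equality (1/C) ∑_{c=1}^C (A μ_c)ᵀ (A Σ_W Aᵀ)⁻¹ (A μ_c) = (1/C) ∑_{c=1}^C μ_cᵀ Σ_W⁻¹ μ_c holds if and only if for every c ∈ {1, …, C}, the vector Σ_W⁻¹ μ_c is orthogonal to the kernel of A. -/
open Matrix

lemma fisher_aux {d p : ℕ} (Sw : Matrix (Fin d) (Fin d) ℝ) (hSw : Sw.PosDef)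
    (A : Matrix (Fin p) (Fin d) ℝ) (hA : Function.Surjective A.mulVec) (x : Fin d → ℝ) :
    A *ᵥ x ⬝ᵥ (A * Sw * Aᵀ)⁻¹ *ᵥ (A *ᵥ x) ≤ x ⬝ᵥ Sw⁻¹ *ᵥ x ∧
    (A *ᵥ x ⬝ᵥ (A * Sw * Aᵀ)⁻¹ *ᵥ (A *ᵥ x) = x ⬝ᵥ Sw⁻¹ *ᵥ x ↔
      ∀ v : Fin d → ℝ, A *ᵥ v = 0 → Sw⁻¹ *ᵥ x ⬝ᵥ v = 0) := by
  have adj : ∀ (y : Fin p → ℝ) (z : Fin d → ℝ), Aᵀ *ᵥ y ⬝ᵥ z = y ⬝ᵥ A *ᵥ z := by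
    intro y z
    rw [mulVec_transpose, dotProduct_mulVec]
  have hinj : Function.Injective A.vecMul := by
    intro a b hab
    have h0 : ∀ z, (a - b) ⬝ᵥ A *ᵥ z = 0 := by
      intro z
      have hab' : a ᵥ* A = b ᵥ* A := hab
      rw [dotProduct_mulVec, sub_vecMul, hab', sub_self, zero_dotProduct]
    obtain ⟨z, hz⟩ := hA (a - b)
    have h1 := h0 z
    have hz' : A *ᵥ z = a - b := hz
    rw [hz', dotProduct_self_eq_zero] at h1
    exact sub_eq_zero.mp h1
  have hM : (A * Sw * Aᵀ).PosDef := by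
    have := hSw.mul_mul_conjTranspose_same (B := A) hinj
    rwa [conjTranspose_eq_transpose_of_trivial] at this
  have hMu : IsUnit (A * Sw * Aᵀ).det := (isUnit_iff_isUnit_det _).mp hM.isUnit
  have hSu : IsUnit Sw.det := (isUnit_iff_isUnit_det _).mp hSw.isUnit
  set y := (A * Sw * Aᵀ)⁻¹ *ᵥ (A *ᵥ x) with hy
  set w := Sw⁻¹ *ᵥ x with hw
  have hMy : A *ᵥ (Sw *ᵥ (Aᵀ *ᵥ y)) = A *ᵥ x := by
    rw [mulVec_mulVec, mulVec_mulVec, hy, mulVec_mulVec,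
      mul_nonsing_inv _ hMu, one_mulVec]
  have hSww : Sw *ᵥ w = x := by
    rw [hw, mulVec_mulVec, mul_nonsing_inv _ hSu, one_mulVec]
  have hT : Swᵀ = Sw := by
    have := hSw.isHermitian.eq
    rwa [conjTranspose_eq_transpose_of_trivial] at this
  have hAu : A *ᵥ (Sw *ᵥ (w - Aᵀ *ᵥ y)) = 0 := by
    rw [mulVec_sub, mulVec_sub, hMy, hSww, sub_self]
  have hsym : w ⬝ᵥ Sw *ᵥ (w - Aᵀ *ᵥ y) = x ⬝ᵥ w - A *ᵥ x ⬝ᵥ y := by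
    rw [dotProduct_mulVec, ← mulVec_transpose, hT, hSww, dotProduct_sub,
      dotProduct_comm x (Aᵀ *ᵥ y), adj, dotProduct_comm y]
  have hq : (w - Aᵀ *ᵥ y) ⬝ᵥ Sw *ᵥ (w - Aᵀ *ᵥ y) = x ⬝ᵥ w - A *ᵥ x ⬝ᵥ y := by
    rw [sub_dotProduct, adj, hAu, dotProduct_zero, sub_zero, hsym]
  refine ⟨?_, ?_, ?_⟩
  · have := hSw.posSemidef.dotProduct_mulVec_nonneg (w - Aᵀ *ᵥ y)
    rw [star_trivial, hq] at this
    linarith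
  · intro h v hv
    have hu : w - Aᵀ *ᵥ y = 0 := by
      by_contra hne
      have := hSw.dotProduct_mulVec_pos hne
      rw [star_trivial, hq] at this
      linarith
    rw [sub_eq_zero.mp hu, adj, hv, dotProduct_zero]
  · intro h
    have := h _ hAu
    rw [hsym] at this
    linarith

/-- For a positive definite within-class covariance `Sw`, class means `μ c`,
and a surjective matrix `A : ℝ^{p×d}` (rank `p`), the Fisher discriminant ratio is preserved
under `A` if and only if for every class `c`, the vector `Sw⁻¹ μ_c` is orthogonal to the
kernel of `A`. -/
theorem fisher_ratio_equality_iff_orthogonal_kernel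
    (d p C : ℕ) (hd : 0 < d) (hp : 0 < p) (hC : 0 < C) (hpd : p ≤ d)
    (Sw : Matrix (Fin d) (Fin d) ℝ) (hSw : Sw.PosDef)
    (μ : Fin C → Fin d → ℝ)
    (A : Matrix (Fin p) (Fin d) ℝ) (hA : Function.Surjective A.mulVec) :
    ((1 / C : ℝ) * ∑ c, A.mulVec (μ c) ⬝ᵥ ((A * Sw * Aᵀ)⁻¹).mulVec (A.mulVec (μ c)) =
        (1 / C : ℝ) * ∑ c, μ c ⬝ᵥ (Sw⁻¹).mulVec (μ c)) ↔
      ∀ c : Fin C, ∀ v : Fin d → ℝ, A.mulVec v = 0 → (Sw⁻¹).mulVec (μ c) ⬝ᵥ v = 0 := by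
  have hC' : (1 / C : ℝ) ≠ 0 := by positivity
  rw [mul_right_inj' hC',
    Finset.sum_eq_sum_iff_of_le (fun c _ => (fisher_aux Sw hSw A hA (μ c)).1)]
  constructor
  · intro h c
    exact (fisher_aux Sw hSw A hA (μ c)).2.mp (h c (Finset.mem_univ c))
  · intro h c _
    exact (fisher_aux Sw hSw A hA (μ c)).2.mpr (h c)
end

section
/- Let s > 1/2 and C₁, C₂ > 0. There exists a constant K > 0, depending only on s, C₁ and C₂, such that for every integer d ≥ 4, every σ with 0 < σ ≤ C₁, and every μ ∈ ℝ^d whose sorted coefficients satisfy C₁ r^{−s} ≤ |μ^{(r)}| ≤ C₂ r^{−s} for all 1 ≤ r ≤ d, if x is a random vector distributed as N(μ, σ² I_d) and ρ_t is the soft-thresholding with threshold λ = σ √(2 log d), then E[‖ρ_t(x) − μ‖²] ≤ K σ^{2 − 1/s} log d. -/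
open MeasureTheory ProbabilityTheory

/-- The Gaussian measure `N(m, σ² I_d)` on `ℝ^d`, as a product of one-dimensional
Gaussian measures. -/
noncomputable def gaussPi (d : ℕ) (m : Fin d → ℝ) (σ : ℝ) : Measure (Fin d → ℝ) :=
  Measure.pi fun i => gaussianReal (m i) (Real.toNNReal (σ ^ 2))

/-- Soft-thresholding with threshold `lam`: `ρ_t(u) = sign(u) · max(|u| − lam, 0)`. -/
noncomputable def softThresh (lam u : ℝ) : ℝ :=
  Real.sign u * max (|u| - lam) 0

/-- `z` has sorted coefficients (by decreasing absolute value) satisfying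
`c₁ r^{−s} ≤ |z^{(r)}| ≤ c₂ r^{−s}` for all `1 ≤ r ≤ d` (here ranks are `0`-indexed,
so rank `r : Fin d` corresponds to `r + 1`). -/
def sortedDecay (s c₁ c₂ : ℝ) {d : ℕ} (z : Fin d → ℝ) : Prop :=
  ∃ e : Equiv.Perm (Fin d),
    (∀ r r' : Fin d, r ≤ r' → |z (e r')| ≤ |z (e r)|) ∧
    ∀ r : Fin d, c₁ * ((r : ℝ) + 1) ^ (-s) ≤ |z (e r)| ∧ |z (e r)| ≤ c₂ * ((r : ℝ) + 1) ^ (-s)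

theorem st_abs (l u : ℝ) : |softThresh l u| ≤ max (|u| - l) 0 := by
  have h0 : 0 ≤ max (|u| - l) 0 := le_max_right _ _
  unfold softThresh
  rw [abs_mul, abs_of_nonneg h0]
  have : |Real.sign u| ≤ 1 := by
    rcases Real.sign_apply_eq u with h | h | h <;> simp [h]
  nlinarith

theorem st_sub (l u : ℝ) (hl : 0 ≤ l) : |softThresh l u - u| ≤ l := by
  unfold softThresh
  rcases lt_trichotomy u 0 with h | h | h
  · rw [Real.sign_of_neg h, abs_of_neg h, abs_le]
    rcases max_cases (-u - l) 0 with ⟨h1, h2⟩ | ⟨h1, h2⟩ <;> rw [h1] <;> constructor <;> linarith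
  · simp [h, hl]
  · rw [Real.sign_of_pos h, abs_of_pos h, abs_le]
    rcases max_cases (u - l) 0 with ⟨h1, h2⟩ | ⟨h1, h2⟩ <;> rw [h1] <;> constructor <;> linarith

theorem st_b1 (l u m : ℝ) (hl : 0 ≤ l) :
    (softThresh l u - m) ^ 2 ≤ 2 * l ^ 2 + 2 * (u - m) ^ 2 := by
  have h := st_sub l u hl
  have h2 : (softThresh l u - u) ^ 2 ≤ l ^ 2 := by
    rw [← sq_abs]; gcongr
  nlinarith [sq_nonneg (softThresh l u - u - (u - m))]

theorem exp_b (t v : ℝ) (ht : 0 ≤ t) (hv : 0 ≤ v) : t ^ 2 * v ^ 2 / 2 ≤ Real.exp (t * v) := by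
  have := Real.quadratic_le_exp_of_nonneg (mul_nonneg ht hv)
  nlinarith [mul_nonneg ht hv]

theorem tail_b (σ t z : ℝ) (hσ : 0 < σ) (ht : 0 < t) :
    (max (|z| - σ * t) 0) ^ 2 ≤ 2 * σ ^ 2 / t ^ 2 * Real.exp (-t ^ 2) *
      (Real.exp (t / σ * z) + Real.exp (-(t / σ) * z)) := by
  rcases max_cases (|z| - σ * t) 0 with ⟨h1, h2⟩ | ⟨h1, h2⟩
  · rw [h1]
    have h := exp_b t ((|z| - σ * t) / σ) ht.le (div_nonneg h2 hσ.le)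
    have e : t * ((|z| - σ * t) / σ) = -t ^ 2 + t / σ * |z| := by field_simp; ring
    rw [e, Real.exp_add] at h
    have h3 : Real.exp (t / σ * |z|) ≤ Real.exp (t / σ * z) + Real.exp (-(t / σ) * z) := by
      rcases abs_cases z with ⟨h, _⟩ | ⟨h, _⟩ <;> rw [h]
      · linarith [Real.exp_pos (-(t / σ) * z)]
      · rw [mul_neg, ← neg_mul]; linarith [Real.exp_pos ((t / σ) * z)]
    calc (|z| - σ * t) ^ 2 = 2 * σ ^ 2 / t ^ 2 * (t ^ 2 * ((|z| - σ * t) / σ) ^ 2 / 2) := by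
          field_simp
      _ ≤ 2 * σ ^ 2 / t ^ 2 * (Real.exp (-t ^ 2) * Real.exp (t / σ * |z|)) := by gcongr
      _ ≤ 2 * σ ^ 2 / t ^ 2 * (Real.exp (-t ^ 2) * (Real.exp (t / σ * z) + Real.exp (-(t / σ) * z))) := by gcongr
      _ = _ := by ring
  · rw [h1, zero_pow two_ne_zero]; positivity

theorem st_b2 (l u m : ℝ) :
    (softThresh l u - m) ^ 2 ≤ 6 * m ^ 2 + 4 * (max (|u - m| - l) 0) ^ 2 := by
  have h := st_abs l u
  have h2 : max (|u| - l) 0 ≤ |m| + max (|u - m| - l) 0 := by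
    have := abs_add_le (u - m) m
    rw [sub_add_cancel] at this
    apply max_le
    · linarith [le_max_left (|u - m| - l) 0]
    · linarith [le_max_right (|u - m| - l) 0, abs_nonneg m]
  have h3 : (softThresh l u) ^ 2 ≤ (|m| + max (|u - m| - l) 0) ^ 2 := by
    rw [← sq_abs (softThresh l u)]; gcongr; linarith
  have := sq_abs m
  nlinarith [sq_nonneg (|m| - max (|u - m| - l) 0), sq_nonneg (softThresh l u + m)]

theorem g_var (m σ : ℝ) :
    Integrable (fun x => (x - m) ^ 2) (gaussianReal m (Real.toNNReal (σ ^ 2))) ∧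
    ∫ x, (x - m) ^ 2 ∂(gaussianReal m (Real.toNNReal (σ ^ 2))) = σ ^ 2 := by
  constructor
  · have : MemLp (fun x => x - m) 2 (gaussianReal m (Real.toNNReal (σ ^ 2))) :=
      (memLp_id_gaussianReal 2).sub (memLp_const m)
    exact this.integrable_sq
  · have h := variance_fun_id_gaussianReal (μ := m) (v := Real.toNNReal (σ ^ 2))
    rw [variance_eq_integral (by fun_prop)] at h
    simpa [integral_id_gaussianReal, sq_nonneg] using h

theorem g_exp (m σ a : ℝ) :
    Integrable (fun x => Real.exp (a * (x - m))) (gaussianReal m (Real.toNNReal (σ ^ 2))) ∧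
    ∫ x, Real.exp (a * (x - m)) ∂(gaussianReal m (Real.toNNReal (σ ^ 2))) =
      Real.exp (σ ^ 2 * a ^ 2 / 2) := by
  have e : (fun x => Real.exp (a * (x - m))) = fun x => Real.exp (- (a * m)) * Real.exp (a * x) := by
    ext x; rw [← Real.exp_add]; ring_nf
  rw [e]
  constructor
  · exact (integrable_exp_mul_gaussianReal a).const_mul _
  · rw [integral_const_mul]
    have := congrFun (mgf_fun_id_gaussianReal (μ := m) (v := Real.toNNReal (σ ^ 2))) a
    rw [mgf] at this
    rw [this, ← Real.exp_add, Real.coe_toNNReal _ (sq_nonneg σ)]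
    ring_nf

theorem risk_b (m σ L : ℝ) (hσ : 0 < σ) (hL : 1 ≤ L) :
    ∃ g : ℝ → ℝ, Integrable g (gaussianReal m (Real.toNNReal (σ ^ 2))) ∧
      (∀ x, (softThresh (σ * Real.sqrt (2 * L)) x - m) ^ 2 ≤ g x) ∧
      ∫ x, g x ∂(gaussianReal m (Real.toNNReal (σ ^ 2))) ≤
        6 * L * min (σ ^ 2) (m ^ 2) + 8 * σ ^ 2 * Real.exp (-L) := by
  set t := Real.sqrt (2 * L) with ht
  have htp : 0 < t := Real.sqrt_pos.2 (by linarith)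
  have ht2 : t ^ 2 = 2 * L := Real.sq_sqrt (by linarith)
  have hE := Real.exp_pos (-L)
  rcases le_total (σ ^ 2) (m ^ 2) with h | h
  · refine ⟨fun x => 2 * (σ * t) ^ 2 + 2 * (x - m) ^ 2, ?_, fun x => st_b1 _ _ _ (by positivity), ?_⟩
    · exact (integrable_const _).add ((g_var m σ).1.const_mul 2)
    · rw [integral_add (integrable_const _) ((g_var m σ).1.const_mul 2), integral_const_mul, integral_const_mul,
        (g_var m σ).2, min_eq_left h]
      simp only [integral_const, probReal_univ, one_smul]
      have : 0 ≤ 8 * σ ^ 2 * Real.exp (-L) := by positivity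
      rw [mul_pow, ht2]
      nlinarith [sq_nonneg σ]
  · have i1 := g_exp m σ (t / σ)
    have i2 := g_exp m σ (-(t / σ))
    have i3 : Integrable (fun x => 2 * σ ^ 2 / t ^ 2 * Real.exp (-t ^ 2) *
        (Real.exp (t / σ * (x - m)) + Real.exp (-(t / σ) * (x - m))))
        (gaussianReal m (Real.toNNReal (σ ^ 2))) :=
      (i1.1.add i2.1).const_mul (2 * σ ^ 2 / t ^ 2 * Real.exp (-t ^ 2))
    refine ⟨fun x => 6 * m ^ 2 + 4 * (2 * σ ^ 2 / t ^ 2 * Real.exp (-t ^ 2) *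
      (Real.exp (t / σ * (x - m)) + Real.exp (-(t / σ) * (x - m)))), ?_, ?_, ?_⟩
    · exact (integrable_const _).add (i3.const_mul 4)
    · intro x
      refine (st_b2 _ _ _).trans ?_
      linarith [tail_b σ t (x - m) hσ htp]
    · have e1 : ∫ x, (6 * m ^ 2 + 4 * (2 * σ ^ 2 / t ^ 2 * Real.exp (-t ^ 2) *
          (Real.exp (t / σ * (x - m)) + Real.exp (-(t / σ) * (x - m)))))
            ∂(gaussianReal m (Real.toNNReal (σ ^ 2))) =
          6 * m ^ 2 + 4 * (2 * σ ^ 2 / t ^ 2 * Real.exp (-t ^ 2) *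
            (Real.exp (σ ^ 2 * (t / σ) ^ 2 / 2) + Real.exp (σ ^ 2 * (-(t / σ)) ^ 2 / 2))) := by
        rw [integral_add (integrable_const _) (i3.const_mul 4), integral_const_mul,
          integral_const_mul, integral_const_mul, integral_add i1.1 i2.1, i1.2, i2.2]
        simp
      rw [e1, min_eq_right h]
      have e2 : σ ^ 2 * (t / σ) ^ 2 / 2 = L := by
        field_simp; linarith
      rw [neg_sq, e2, ht2]
      have e3 : Real.exp (-(2 * L)) * (Real.exp L + Real.exp L) = 2 * Real.exp (-L) := by
        rw [← two_mul, mul_left_comm, ← Real.exp_add]; ring_nf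
      rw [mul_assoc (2 * σ ^ 2 / (2 * L)), e3]
      have e4 : 2 * σ ^ 2 / (2 * L) ≤ σ ^ 2 := by
        rw [div_le_iff₀ (by linarith)]; nlinarith [sq_nonneg σ]
      have e5 : m ^ 2 ≤ L * m ^ 2 := by nlinarith [sq_nonneg m]
      have e6 := mul_le_mul_of_nonneg_right e4 hE.le
      nlinarith

theorem sum_b (s σ : ℝ) (hs : 1 / 2 < s) (hσ : 0 < σ) (n : ℕ) :
    ∑ r ∈ Finset.range n, min (σ ^ 2) (((r : ℝ) + 1) ^ (-(2 * s))) ≤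
      (1 + 1 / (2 * s - 1)) * σ ^ (2 - 1 / s) := by
  have hs0 : 0 < s := by linarith
  set a : ℝ := σ ^ (-(1 / s)) with ha
  have hap : 0 < a := Real.rpow_pos_of_pos hσ _
  have ha2 : a ^ (-(2 * s)) = σ ^ 2 := by
    rw [ha, ← Real.rpow_mul hσ.le, ← Real.rpow_natCast]
    congr 1; field_simp; norm_num
  have ha3 : a ^ (-(2 * s) + 1) = σ ^ (2 - 1 / s) := by
    rw [ha, ← Real.rpow_mul hσ.le]
    congr 1; field_simp; ring
  have ha4 : a * σ ^ 2 = σ ^ (2 - 1 / s) := by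
    rw [← ha3, Real.rpow_add hap, ha2, Real.rpow_one, mul_comm]
  let f : ℝ → ℝ := fun x => (max x a) ^ (-(2 * s))
  have hf : Antitone f := by
    intro x y hxy
    exact Real.rpow_le_rpow_of_nonpos (lt_max_of_lt_right hap) (max_le_max_right a hxy) (by linarith)
  have hmin : ∀ r : ℕ, min (σ ^ 2) (((r : ℝ) + 1) ^ (-(2 * s))) ≤ f (0 + ((r + 1 : ℕ) : ℝ)) := by
    intro r
    simp only [f, zero_add, Nat.cast_add, Nat.cast_one]
    rcases max_cases ((r : ℝ) + 1) a with ⟨h, _⟩ | ⟨h, _⟩ <;> rw [h]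
    · exact min_le_right _ _
    · rw [ha2]; exact min_le_left _ _
  have i1 : IntegrableOn f (Set.Ioc 0 a) := by
    refine (integrableOn_const (C := σ ^ 2) (by simp)).congr_fun ?_ measurableSet_Ioc
    intro x hx
    simp only [f]; rw [max_eq_right hx.2, ha2]
  have hc : Set.EqOn (fun x : ℝ => x ^ (-(2 * s))) f (Set.Ioi a) := by
    intro x hx
    simp only [f]; rw [max_eq_left (le_of_lt hx)]
  have i2 : IntegrableOn f (Set.Ioi a) :=
    (integrableOn_Ioi_rpow_of_lt (by linarith) hap).congr_fun hc measurableSet_Ioi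
  have hu : Set.Ioi (0 : ℝ) = Set.Ioc 0 a ∪ Set.Ioi a := (Set.Ioc_union_Ioi_eq_Ioi hap.le).symm
  calc _ ≤ ∑ r ∈ Finset.range n, f (0 + ((r + 1 : ℕ) : ℝ)) := Finset.sum_le_sum fun r _ => hmin r
    _ ≤ ∫ x in (0 : ℝ)..0 + n, f x := (hf.antitoneOn _).sum_le_integral
    _ = ∫ x in Set.Ioc 0 (0 + (n : ℝ)), f x := intervalIntegral.integral_of_le (by simp)
    _ ≤ ∫ x in Set.Ioi 0, f x := by
        apply setIntegral_mono_set
        · rw [hu]; exact i1.union i2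
        · exact Filter.Eventually.of_forall fun x =>
            Real.rpow_nonneg (le_max_of_le_right hap.le) _
        · exact (Set.Ioc_subset_Ioi_self).eventuallyLE
    _ = (∫ x in Set.Ioc 0 a, f x) + ∫ x in Set.Ioi a, f x := by
        rw [hu]
        exact setIntegral_union (Set.disjoint_left.2 fun x hx hx' => not_lt.2 hx.2 hx')
          measurableSet_Ioi i1 i2
    _ = σ ^ (2 - 1 / s) + σ ^ (2 - 1 / s) / (2 * s - 1) := by
        congr 1
        · rw [setIntegral_congr_fun (g := fun _ => σ ^ 2) measurableSet_Ioc]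
          · rw [← ha4]; simp [hap.le]
          · intro x hx
            simp only [f]; rw [max_eq_right hx.2, ha2]
        · rw [← setIntegral_congr_fun measurableSet_Ioi hc,
            integral_Ioi_rpow_of_lt (by linarith) hap, ha3]
          rw [neg_div, ← div_neg]; congr 1; ring
    _ = _ := by ring

/-- For `s > 1/2` there is a constant `K` (depending only on `s, c₁, c₂`)
such that for all `d ≥ 4`, `0 < σ ≤ c₁`, and `μ` with sorted coefficients decaying as
`r^{−s}`, soft-thresholding a Gaussian `N(μ, σ² I_d)` at `λ = σ √(2 log d)` satisfies
`E[‖ρ_t(x) − μ‖²] ≤ K σ^{2 − 1/s} log d`. -/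
theorem soft_thresholding_gaussian_estimate
    (s c₁ c₂ : ℝ) (hs : 1 / 2 < s) (hc₁ : 0 < c₁) (hc₂ : 0 < c₂) :
    ∃ K > 0, ∀ d : ℕ, 4 ≤ d → ∀ σ : ℝ, 0 < σ → σ ≤ c₁ →
      ∀ μ : Fin d → ℝ, sortedDecay s c₁ c₂ μ →
        ∫ x, ∑ i, (softThresh (σ * Real.sqrt (2 * Real.log d)) (x i) - μ i) ^ 2
            ∂(gaussPi d μ σ) ≤ K * σ ^ (2 - 1 / s) * Real.log d := by
  have hs0 : 0 < s := by linarith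
  have h2s : 0 < 2 * s - 1 := by linarith
  set M : ℝ := 1 + 1 / (2 * s - 1) with hM
  have hMp : 0 < M := by positivity
  refine ⟨6 * (1 + c₂ ^ 2) * M + 8 * c₁ ^ (1 / s), by positivity, ?_⟩
  rintro d hd σ hσ hσc μ ⟨e, -, he⟩
  have hd' : (4 : ℝ) ≤ d := by exact_mod_cast hd
  have hL : 1 ≤ Real.log d := by
    rw [Real.le_log_iff_exp_le (by linarith)]
    linarith [Real.exp_one_lt_d9]
  set L := Real.log d with hLd
  have hexp : Real.exp (-L) = 1 / d := by
    rw [Real.exp_neg, hLd, Real.exp_log (by linarith), one_div]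
  choose g hg1 hg2 hg3 using fun i => risk_b (μ i) σ L hσ hL
  have hgi : ∀ i, Integrable (fun x : Fin d → ℝ => g i (x i)) (gaussPi d μ σ) := fun i =>
    integrable_comp_eval (hg1 i)
  have hS : σ ^ 2 ≤ c₁ ^ (1 / s) * σ ^ (2 - 1 / s) := by
    have : σ ^ 2 = σ ^ (1 / s) * σ ^ (2 - 1 / s) := by
      rw [← Real.rpow_add hσ, ← Real.rpow_natCast]; congr 1; push_cast; ring
    rw [this]
    gcongr
  have hSp : 0 < σ ^ (2 - 1 / s) := Real.rpow_pos_of_pos hσ _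
  have hsum : ∑ i, min (σ ^ 2) (μ i ^ 2) ≤ (1 + c₂ ^ 2) * (M * σ ^ (2 - 1 / s)) := by
    rw [← Equiv.sum_comp e]
    calc _ ≤ ∑ r : Fin d, (1 + c₂ ^ 2) * min (σ ^ 2) (((r : ℝ) + 1) ^ (-(2 * s))) := by
          refine Finset.sum_le_sum fun r _ => ?_
          have hr : (0 : ℝ) < (r : ℝ) + 1 := by positivity
          have h1 : μ (e r) ^ 2 ≤ c₂ ^ 2 * ((r : ℝ) + 1) ^ (-(2 * s)) := by
            have : ((r : ℝ) + 1) ^ (-(2 * s)) = (((r : ℝ) + 1) ^ (-s)) ^ 2 := by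
              rw [← Real.rpow_mul_natCast hr.le]; congr 1; push_cast; ring
            rw [this, ← mul_pow, ← sq_abs]
            gcongr
            exact (he r).2
          have h2 : 0 < ((r : ℝ) + 1) ^ (-(2 * s)) := by positivity
          rcases min_cases (σ ^ 2) (((r : ℝ) + 1) ^ (-(2 * s))) with ⟨h, _⟩ | ⟨h, _⟩ <;> rw [h]
          · exact (min_le_left _ _).trans (by nlinarith [sq_nonneg σ, sq_nonneg c₂, mul_nonneg (sq_nonneg σ) (sq_nonneg c₂)])
          · exact (min_le_right _ _).trans (by linarith)
      _ = (1 + c₂ ^ 2) * ∑ r ∈ Finset.range d, min (σ ^ 2) (((r : ℝ) + 1) ^ (-(2 * s))) := by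
          rw [← Finset.mul_sum, Finset.sum_range]
      _ ≤ _ := by
          gcongr
          exact sum_b s σ hs hσ d
  calc _ ≤ ∫ x, ∑ i, g i (x i) ∂(gaussPi d μ σ) := by
        apply integral_mono_of_nonneg
        · exact Filter.Eventually.of_forall fun x => Finset.sum_nonneg fun i _ => sq_nonneg _
        · exact integrable_finsetSum _ fun i _ => hgi i
        · exact Filter.Eventually.of_forall fun x => Finset.sum_le_sum fun i _ => hg2 i (x i)
    _ = ∑ i, ∫ x, g i x ∂(gaussianReal (μ i) (Real.toNNReal (σ ^ 2))) := by
        rw [integral_finsetSum _ fun i _ => hgi i]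
        exact Finset.sum_congr rfl fun i _ => integral_comp_eval (hg1 i).aestronglyMeasurable
    _ ≤ ∑ i, (6 * L * min (σ ^ 2) (μ i ^ 2) + 8 * σ ^ 2 * Real.exp (-L)) :=
        Finset.sum_le_sum fun i _ => hg3 i
    _ = 6 * L * ∑ i, min (σ ^ 2) (μ i ^ 2) + 8 * σ ^ 2 := by
        rw [Finset.sum_add_distrib, ← Finset.mul_sum, hexp]
        simp only [Finset.sum_const, Finset.card_univ, Fintype.card_fin, nsmul_eq_mul]
        field_simp
    _ ≤ 6 * L * ((1 + c₂ ^ 2) * (M * σ ^ (2 - 1 / s))) + 8 * (c₁ ^ (1 / s) * σ ^ (2 - 1 / s) * L) := by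
        have : 0 < c₁ ^ (1 / s) * σ ^ (2 - 1 / s) := by positivity
        have h3 : σ ^ 2 ≤ c₁ ^ (1 / s) * σ ^ (2 - 1 / s) * L := by nlinarith
        have h4 := mul_le_mul_of_nonneg_left hsum (show 0 ≤ 6 * L by linarith)
        linarith
    _ = _ := by ring
end

section
/- Let s > 1/2 and C₁, C₂ > 0. There exists a constant K > 0, depending only on s, C₁ and C₂, such that for every integer d ≥ 1, every σ with 0 < σ ≤ C₁, and every μ ∈ ℝ^d whose sorted coefficients satisfy C₁ r^{−s} ≤ |μ^{(r)}| ≤ C₂ r^{−s} for all 1 ≤ r ≤ d, one has ∑_{m=1}^d min(μ[m]², σ²) ≤ K σ^{2 − 1/s}. -/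
lemma aux_step (p x : ℝ) (hp : 1 < p) (hx : 0 < x) :
    (p - 1) * (x + 1) ^ (-p) ≤ x ^ (1 - p) - (x + 1) ^ (1 - p) := by
  have hx1 : 0 < x + 1 := by linarith
  have hq : 0 < x / (x + 1) := by positivity
  have h1 : Real.log (x / (x + 1)) ≤ x / (x + 1) - 1 := Real.log_le_sub_one_of_pos hq
  have h2 : 1 + (p - 1) * (x + 1)⁻¹ ≤ (x / (x + 1)) ^ (1 - p) := by
    rw [Real.rpow_def_of_pos hq]
    have h3 := Real.add_one_le_exp (Real.log (x / (x + 1)) * (1 - p))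
    have h4 : x / (x + 1) - 1 = - (x + 1)⁻¹ := by field_simp; ring
    rw [h4] at h1
    nlinarith
  rw [Real.div_rpow hx.le hx1.le] at h2
  have hpos : 0 < (x + 1) ^ (1 - p) := Real.rpow_pos_of_pos hx1 _
  rw [le_div_iff₀ hpos] at h2
  have h5 : (x + 1) ^ (-p) = (x + 1)⁻¹ * (x + 1) ^ (1 - p) := by
    rw [← Real.rpow_neg_one, ← Real.rpow_add hx1]; congr 1; ring
  rw [h5]
  linarith

lemma aux_tail (p : ℝ) (hp : 1 < p) (N : ℕ) (hN : 1 ≤ N) (k : ℕ) :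
    (p - 1) * ∑ i ∈ Finset.range k, (((N + i : ℕ) : ℝ) + 1) ^ (-p)
      ≤ (N : ℝ) ^ (1 - p) - ((N + k : ℕ) : ℝ) ^ (1 - p) := by
  induction k with
  | zero => simp
  | succ k ih =>
    rw [Finset.sum_range_succ, mul_add]
    have hx : (0 : ℝ) < ((N + k : ℕ) : ℝ) := by
      have : 0 < N + k := by omega
      exact_mod_cast this
    have := aux_step p _ hp hx
    have h : ((N + (k + 1) : ℕ) : ℝ) = ((N + k : ℕ) : ℝ) + 1 := by push_cast; ring
    rw [h]
    linarith

theorem sum_min_sq_le_of_sortedDecay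
    (s c₁ c₂ : ℝ) (hs : 1 / 2 < s) (hc₁ : 0 < c₁) (hc₂ : 0 < c₂) :
    ∃ K > 0, ∀ d : ℕ, 1 ≤ d → ∀ σ : ℝ, 0 < σ → σ ≤ c₁ →
      ∀ μ : Fin d → ℝ, sortedDecay s c₁ c₂ μ →
        ∑ m, min ((μ m) ^ 2) (σ ^ 2) ≤ K * σ ^ (2 - 1 / s) := by
  have hs0 : 0 < s := by linarith
  have hp : 1 < 2 * s := by linarith
  have hp0 : 0 < 2 * s - 1 := by linarith
  refine ⟨c₁ ^ (1 / s) + c₂ ^ 2 * ((2⁻¹ : ℝ) ^ (1 - 2 * s) * c₁ ^ (1 / s - 2) / (2 * s - 1)),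
    by positivity, ?_⟩
  intro d _ σ hσ hσc μ ⟨e, _, he⟩
  set R : ℝ := (c₁ / σ) ^ (1 / s) with hR
  have hq : 1 ≤ c₁ / σ := by rwa [one_le_div hσ]
  have hR1 : 1 ≤ R := Real.one_le_rpow hq (by positivity)
  set N := ⌊R⌋₊ with hNdef
  have hN : 1 ≤ N := Nat.le_floor (by simpa using hR1)
  have hNR : (N : ℝ) ≤ R := Nat.floor_le (by linarith)
  have hRN : R < N + 1 := Nat.lt_floor_add_one R
  have hN' : (1 : ℝ) ≤ N := by exact_mod_cast hN
  set g : ℕ → ℝ := fun r => min (c₂ ^ 2 * ((r : ℝ) + 1) ^ (-(2 * s))) (σ ^ 2) with hg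
  have hg0 : ∀ r, 0 ≤ g r := fun r => by simp only [hg]; positivity
  have e1 : ∑ m, min ((μ m) ^ 2) (σ ^ 2) ≤ ∑ r ∈ Finset.range (N + d), g r := by
    rw [← Equiv.sum_comp e]
    calc _ ≤ ∑ r : Fin d, g r := by
          refine Finset.sum_le_sum fun r _ => min_le_min ?_ le_rfl
          have h := (he r).2
          rw [← sq_abs]
          refine (pow_le_pow_left₀ (abs_nonneg _) h 2).trans (le_of_eq ?_)
          rw [mul_pow, ← Real.rpow_mul_natCast (by positivity)]
          congr 2; push_cast; ring
      _ = ∑ r ∈ Finset.range d, g r := Fin.sum_univ_eq_sum_range g d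
      _ ≤ _ := Finset.sum_le_sum_of_subset_of_nonneg
          (Finset.range_mono (by omega)) fun i _ _ => hg0 i
  rw [Finset.sum_range_add] at e1
  have e2 : ∑ r ∈ Finset.range N, g r ≤ N * σ ^ 2 := by
    refine (Finset.sum_le_sum fun r _ => min_le_right _ _).trans ?_
    simp
  have e3 : ∑ i ∈ Finset.range d, g (N + i)
      ≤ c₂ ^ 2 * ((N : ℝ) ^ (1 - 2 * s) / (2 * s - 1)) := by
    refine (Finset.sum_le_sum fun r _ => min_le_left _ _).trans ?_
    rw [← Finset.mul_sum]
    refine mul_le_mul_of_nonneg_left ?_ (by positivity)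
    rw [le_div_iff₀ hp0, mul_comm]
    refine (aux_tail _ hp N hN d).trans ?_
    have : (0 : ℝ) ≤ ((N + d : ℕ) : ℝ) ^ (1 - 2 * s) := by positivity
    linarith
  have e4 : (N : ℝ) ^ (1 - 2 * s) ≤ (2⁻¹ : ℝ) ^ (1 - 2 * s) * R ^ (1 - 2 * s) := by
    rw [← Real.mul_rpow (by norm_num) (by linarith)]
    exact Real.rpow_le_rpow_of_nonpos (by linarith) (by linarith) (by linarith)
  have e5 : R ^ (1 - 2 * s) = c₁ ^ (1 / s - 2) * σ ^ (2 - 1 / s) := by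
    rw [hR, ← Real.rpow_mul (by positivity), Real.div_rpow hc₁.le hσ.le, div_eq_mul_inv,
      ← Real.rpow_neg hσ.le]
    have : 1 / s * (1 - 2 * s) = 1 / s - 2 := by field_simp
    rw [this, neg_sub]
  have e6 : R * σ ^ 2 = c₁ ^ (1 / s) * σ ^ (2 - 1 / s) := by
    rw [hR, Real.div_rpow hc₁.le hσ.le, Real.rpow_sub hσ, Real.rpow_two]
    ring
  have e7 : (N : ℝ) * σ ^ 2 ≤ R * σ ^ 2 := by gcongr
  rw [e5] at e4
  have e8 : c₂ ^ 2 * ((N : ℝ) ^ (1 - 2 * s) / (2 * s - 1)) ≤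
      c₂ ^ 2 * ((2⁻¹ : ℝ) ^ (1 - 2 * s) * (c₁ ^ (1 / s - 2) * σ ^ (2 - 1 / s)) / (2 * s - 1)) := by
    gcongr
  calc _ ≤ _ := e1
    _ ≤ c₁ ^ (1 / s) * σ ^ (2 - 1 / s) + c₂ ^ 2 * ((2⁻¹ : ℝ) ^ (1 - 2 * s) *
        (c₁ ^ (1 / s - 2) * σ ^ (2 - 1 / s)) / (2 * s - 1)) := by linarith
    _ = _ := by ring
end

section
/- Let s > 1/2 and C₁, C₂ > 0. There exists a constant K > 0, depending only on s, C₁ and C₂, such that for every integer d ≥ 4, every σ with 0 < σ ≤ C₁, every orthogonal matrix F ∈ ℝ^{d×d}, and every μ ∈ ℝ^d such that the sorted coefficients of Fμ satisfy C₁ r^{−s} ≤ |(Fμ)^{(r)}| ≤ C₂ r^{−s} for all 1 ≤ r ≤ d, the map Φ(x) = Fᵀ ρ_t(F x), with ρ_t the soft-thresholding with threshold λ = σ √(2 log d), satisfies both E[‖Φ(x) − μ‖²] ≤ K σ^{2 − 1/s} log d and ‖E[Φ(x)] − μ‖² ≤ K σ^{2 − 1/s} log d, where x is distributed as N(μ,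 σ² I_d). -/
open Matrix MeasureTheory ProbabilityTheory

lemma step_tel (q y : ℝ) (hq : 0 < q) (hy : 0 < y) :
    q * (y + 1) ^ (-(q + 1)) ≤ y ^ (-q) - (y + 1) ^ (-q) := by
  have h1 : 0 < y + 1 := by linarith
  have e1 : (y + 1) ^ (-(q + 1)) = (y + 1) ^ (-q) * (y + 1)⁻¹ := by
    rw [show -(q + 1) = -q + -1 by ring, Real.rpow_add h1, Real.rpow_neg_one]
  have e2 : y ^ (-q) = (y + 1) ^ (-q) * (y / (y + 1)) ^ (-q) := by
    rw [← Real.mul_rpow h1.le (by positivity)]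
    congr 1
    field_simp
  have hpos : 0 < (y + 1) ^ (-q) := Real.rpow_pos_of_pos h1 _
  have hb : 1 + q * (y + 1)⁻¹ ≤ (y / (y + 1)) ^ (-q) := by
    have hx : 0 < y / (y + 1) := by positivity
    rw [Real.rpow_def_of_pos hx]
    have hl := Real.log_le_sub_one_of_pos hx
    have hy1 : y / (y + 1) - 1 = -(y + 1)⁻¹ := by field_simp; ring
    have := Real.add_one_le_exp (Real.log (y / (y + 1)) * -q)
    nlinarith
  rw [e1, e2]
  nlinarith

lemma sum_tel (q N : ℝ) (hq : 0 < q) (hN : 0 < N) (d : ℕ) :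
    ∑ r ∈ Finset.range d, q * (N + r + 1) ^ (-(q + 1)) ≤ N ^ (-q) - (N + d) ^ (-q) := by
  induction d with
  | zero => simp
  | succ n ih =>
    rw [Finset.sum_range_succ]
    have := step_tel q (N + n) hq (by positivity)
    push_cast
    rw [← add_assoc]
    linarith

lemma min_le_tel (p N r : ℝ) (hp : 0 < p) (hN : 0 < N) (hr : 0 < r) :
    min 1 (r ^ (-p) * N ^ p) ≤ 2 ^ p * N ^ p * (N + r) ^ (-p) := by
  have h2 : (2:ℝ) ^ p * N ^ p * (N + r) ^ (-p) = (2 * N) ^ p * (N + r) ^ (-p) := by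
    rw [Real.mul_rpow (by norm_num) hN.le]
  rcases le_total r N with h | h
  · refine (min_le_left _ _).trans ?_
    rw [h2, Real.rpow_neg (by positivity), ← div_eq_mul_inv, one_le_div (by positivity)]
    exact Real.rpow_le_rpow (by positivity) (by linarith) hp.le
  · refine (min_le_right _ _).trans ?_
    have : r ^ (-p) = 2 ^ p * (2 * r) ^ (-p) := by
      rw [Real.mul_rpow (by norm_num) hr.le, ← mul_assoc, ← Real.rpow_add (by norm_num)]
      simp
    rw [this]
    have h3 : (2 * r) ^ (-p) ≤ (N + r) ^ (-p) :=
      Real.rpow_le_rpow_of_nonpos (by positivity) (by linarith) (by linarith)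
    have : 0 < (2:ℝ) ^ p * N ^ p := by positivity
    nlinarith

lemma sum_min (p N : ℝ) (hp : 1 < p) (hN : 0 < N) (d : ℕ) :
    ∑ r : Fin d, min 1 (((r : ℝ) + 1) ^ (-p) * N ^ p) ≤ 2 ^ p / (p - 1) * N := by
  rw [Fin.sum_univ_eq_sum_range (fun r : ℕ => min 1 (((r : ℝ) + 1) ^ (-p) * N ^ p)) d]
  have h1 : ∑ r ∈ Finset.range d, min 1 (((r : ℝ) + 1) ^ (-p) * N ^ p) ≤
      ∑ r ∈ Finset.range d, 2 ^ p * N ^ p / (p - 1) * ((p - 1) * (N + r + 1) ^ (-(p - 1 + 1))) := by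
    refine Finset.sum_le_sum fun r _ => ?_
    refine (min_le_tel p N (r + 1) (by linarith) hN (by positivity)).trans (le_of_eq ?_)
    have : p - 1 ≠ 0 := by linarith
    rw [sub_add_cancel, ← add_assoc]
    field_simp
  refine h1.trans ?_
  rw [← Finset.mul_sum]
  have h2 := sum_tel (p - 1) N (by linarith) hN d
  have h3 : 0 < (N + d) ^ (-(p - 1)) := by positivity
  have h4 : 0 < p - 1 := by linarith
  calc _ ≤ 2 ^ p * N ^ p / (p - 1) * N ^ (-(p - 1)) := by gcongr; linarith
    _ = 2 ^ p / (p - 1) * (N ^ p * N ^ (-(p - 1))) := by ring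
    _ = _ := by rw [← Real.rpow_add hN]; norm_num

lemma soft_eq (l u : ℝ) (hl : 0 ≤ l) : softThresh l u = max (u - l) 0 - max (-u - l) 0 := by
  unfold softThresh
  rcases lt_trichotomy u 0 with h | h | h
  · rw [Real.sign_of_neg h, abs_of_neg h, max_eq_right (show u - l ≤ 0 by linarith)]; ring
  · subst h; simp
  · rw [Real.sign_of_pos h, abs_of_pos h, max_eq_right (show -u - l ≤ 0 by linarith)]; ring

lemma soft_bound_a (l m w : ℝ) (hl : 0 ≤ l) :
    (softThresh l (m + w) - m) ^ 2 ≤ 2 * l ^ 2 + 2 * w ^ 2 := by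
  have h : |softThresh l (m + w) - (m + w)| ≤ l := by
    rw [soft_eq _ _ hl, abs_le]
    constructor <;> rcases max_cases (m + w - l) 0 with h | h <;>
      rcases max_cases (-(m + w) - l) 0 with h' | h' <;> linarith
  have h2 := abs_le.1 h
  have : (softThresh l (m + w) - (m + w)) ^ 2 ≤ l ^ 2 := by
    rw [sq_le_sq, abs_of_nonneg hl]; exact h
  nlinarith [sq_nonneg (softThresh l (m + w) - (m + w) - w)]

lemma soft_bound_b (l m w : ℝ) (hl : 0 ≤ l) :
    (softThresh l (m + w) - m) ^ 2 ≤ 8 * m ^ 2 + 2 * (softThresh l w) ^ 2 := by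
  have h : |softThresh l (m + w) - softThresh l w| ≤ |m| := by
    rw [soft_eq _ _ hl, soft_eq _ _ hl, abs_le]
    constructor <;> rcases abs_cases m with h0 | h0 <;>
     rcases max_cases (m + w - l) 0 with h | h <;> rcases max_cases (w - l) 0 with h1 | h1 <;>
      rcases max_cases (-(m + w) - l) 0 with h' | h' <;>
      rcases max_cases (-w - l) 0 with h'' | h'' <;> linarith
  have h2 : (softThresh l (m + w) - softThresh l w) ^ 2 ≤ m ^ 2 := sq_le_sq.2 h
  nlinarith [sq_nonneg (softThresh l (m + w) - softThresh l w - m - softThresh l w),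
    sq_nonneg (softThresh l (m + w) - softThresh l w + m)]

lemma pos_sq_le (v t : ℝ) (ht : 2 ≤ t ^ 2) (ht0 : 0 < t) :
    (max (v - t) 0) ^ 2 ≤ Real.exp (t * v - t ^ 2) := by
  rcases le_total (v - t) 0 with h | h
  · rw [max_eq_right h]; simp; positivity
  · rw [max_eq_left h]
    have := Real.quadratic_le_exp_of_nonneg (x := t * v - t ^ 2) (by nlinarith)
    nlinarith [mul_le_mul_of_nonneg_right ht (sq_nonneg (v - t))]

lemma soft_sq_le (σ t w : ℝ) (hσ : 0 < σ) (ht : 2 ≤ t ^ 2) (ht0 : 0 < t) :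
    (softThresh (σ * t) w) ^ 2 ≤
      σ ^ 2 * Real.exp (- t ^ 2) * (Real.exp (t / σ * w) + Real.exp (-(t / σ) * w)) := by
  rw [soft_eq _ _ (by positivity)]
  have h1 : max (w - σ * t) 0 = σ * max (w / σ - t) 0 := by
    rw [mul_max_of_nonneg _ _ hσ.le, mul_zero, mul_sub, mul_div_cancel₀ _ hσ.ne']
  have h2 : max (-w - σ * t) 0 = σ * max (-w / σ - t) 0 := by
    rw [mul_max_of_nonneg _ _ hσ.le, mul_zero, mul_sub, mul_div_cancel₀ _ hσ.ne']
  have a1 := pos_sq_le (w / σ) t ht ht0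
  have a2 := pos_sq_le (-w / σ) t ht ht0
  have e1 : Real.exp (t * (w / σ) - t ^ 2) = Real.exp (-t ^ 2) * Real.exp (t / σ * w) := by
    rw [← Real.exp_add]; congr 1; ring
  have e2 : Real.exp (t * (-w / σ) - t ^ 2) = Real.exp (-t ^ 2) * Real.exp (-(t / σ) * w) := by
    rw [← Real.exp_add]; congr 1; ring
  rw [h1, h2]
  rw [e1] at a1
  rw [e2] at a2
  have n1 : 0 ≤ max (w / σ - t) 0 := le_max_right _ _
  have n2 : 0 ≤ max (-w / σ - t) 0 := le_max_right _ _
  generalize max (w / σ - t) 0 = A at *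
  generalize max (-w / σ - t) 0 = B at *
  have : (σ * A - σ * B) ^ 2 ≤ σ ^ 2 * (A ^ 2 + B ^ 2) := by
    nlinarith [mul_nonneg (sq_nonneg σ) (mul_nonneg n1 n2)]
  refine this.trans ?_
  rw [mul_assoc]
  gcongr
  linarith

lemma sq_le_exp (σ w : ℝ) (hσ : 0 < σ) :
    w ^ 2 ≤ 2 * σ ^ 2 * (Real.exp (1 / σ * w) + Real.exp (-(1 / σ) * w)) := by
  have key : ∀ v : ℝ, v ^ 2 ≤ 2 * (Real.exp v + Real.exp (-v)) := by
    intro v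
    rcases le_total 0 v with h | h
    · have := Real.quadratic_le_exp_of_nonneg h
      have := Real.exp_pos (-v)
      nlinarith
    · have := Real.quadratic_le_exp_of_nonneg (x := -v) (by linarith)
      have := Real.exp_pos v
      nlinarith
  have := key (w / σ)
  have e : w ^ 2 = σ ^ 2 * (w / σ) ^ 2 := by field_simp
  rw [e, show 1 / σ * w = w / σ by ring, show -(1 / σ) * w = - (w / σ) by ring]
  nlinarith [sq_nonneg σ, mul_le_mul_of_nonneg_left this (sq_nonneg σ)]

lemma gauss_mgf (d : ℕ) (μ a : Fin d → ℝ) (σ c : ℝ) (ha : ∑ j, a j ^ 2 = 1) :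
    Integrable (fun x => Real.exp (c * ∑ j, a j * (x j - μ j))) (gaussPi d μ σ) ∧
    ∫ x, Real.exp (c * ∑ j, a j * (x j - μ j)) ∂(gaussPi d μ σ) = Real.exp (c ^ 2 * σ ^ 2 / 2) := by
  have e : (fun x : Fin d → ℝ => Real.exp (c * ∑ j, a j * (x j - μ j))) =
      fun x => ∏ j, (Real.exp (-(c * a j * μ j)) * Real.exp (c * a j * x j)) := by
    funext x
    simp_rw [← Real.exp_add]
    rw [← Real.exp_sum, Finset.mul_sum]
    congr 1
    refine Finset.sum_congr rfl fun j _ => ?_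
    ring
  have hi : ∀ j, Integrable (fun y => Real.exp (-(c * a j * μ j)) * Real.exp (c * a j * y))
      (gaussianReal (μ j) (Real.toNNReal (σ ^ 2))) := fun j =>
    (integrable_exp_mul_gaussianReal (c * a j)).const_mul _
  rw [e]
  unfold gaussPi
  refine ⟨Integrable.fintype_prod hi, ?_⟩
  rw [integral_fintype_prod_eq_prod (𝕜 := ℝ) (f := fun j y => Real.exp (-(c * a j * μ j)) * Real.exp (c * a j * y))]
  have : ∀ j, ∫ y, Real.exp (-(c * a j * μ j)) * Real.exp (c * a j * y)
      ∂(gaussianReal (μ j) (Real.toNNReal (σ ^ 2))) = Real.exp (a j ^ 2 * (c ^ 2 * σ ^ 2 / 2)) := by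
    intro j
    rw [integral_const_mul]
    have := congrFun (mgf_id_gaussianReal (μ := μ j) (v := Real.toNNReal (σ ^ 2))) (c * a j)
    simp only [mgf, id] at this
    rw [this, ← Real.exp_add, Real.coe_toNNReal _ (sq_nonneg σ)]
    congr 1
    ring
  simp_rw [this]
  rw [← Real.exp_sum, ← Finset.sum_mul, ha, one_mul]

lemma int_affine {Ω : Type*} [MeasurableSpace Ω] (P : Measure Ω) [IsProbabilityMeasure P]
    (f g : Ω → ℝ) (hf : Integrable f P) (hg : Integrable g P) (A C : ℝ) :
    ∫ x, (A + C * (f x + g x)) ∂P = A + C * (∫ x, f x ∂P + ∫ x, g x ∂P) := by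
  have h : Integrable (fun x => C * (f x + g x)) P := (hf.add hg).const_mul C
  rw [integral_add (integrable_const _) h, integral_const_mul, integral_add hf hg]
  simp

lemma coord_risk (d : ℕ) (hd : 4 ≤ d) (μ a : Fin d → ℝ) (σ m : ℝ) (hσ : 0 < σ)
    (ha : ∑ j, a j ^ 2 = 1) :
    Integrable (fun x => (softThresh (σ * Real.sqrt (2 * Real.log d))
      (m + ∑ j, a j * (x j - μ j)) - m) ^ 2) (gaussPi d μ σ) ∧
    ∫ x, (softThresh (σ * Real.sqrt (2 * Real.log d))
      (m + ∑ j, a j * (x j - μ j)) - m) ^ 2 ∂(gaussPi d μ σ) ≤ 20 * σ ^ 2 * Real.log d ∧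
    ∫ x, (softThresh (σ * Real.sqrt (2 * Real.log d))
      (m + ∑ j, a j * (x j - μ j)) - m) ^ 2 ∂(gaussPi d μ σ) ≤ 8 * m ^ 2 + 4 * σ ^ 2 / d := by
  have hd' : (4 : ℝ) ≤ d := by exact_mod_cast hd
  have hL : 1 ≤ Real.log d := by
    rw [Real.le_log_iff_exp_le (by linarith)]
    linarith [Real.exp_one_lt_d9]
  set L := Real.log d with hLdef
  set t := Real.sqrt (2 * L) with htdef
  have ht2 : t ^ 2 = 2 * L := Real.sq_sqrt (by linarith)
  have ht0 : 0 < t := Real.sqrt_pos.2 (by linarith)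
  have : IsProbabilityMeasure (gaussPi d μ σ) := by unfold gaussPi; infer_instance
  set P := gaussPi d μ σ
  have hl : 0 ≤ σ * t := by positivity
  -- domination (a)
  have ba : ∀ x : Fin d → ℝ, (softThresh (σ * t) (m + ∑ j, a j * (x j - μ j)) - m) ^ 2 ≤
      2 * (σ * t) ^ 2 + 4 * σ ^ 2 * (Real.exp (1 / σ * ∑ j, a j * (x j - μ j)) +
        Real.exp (-(1 / σ) * ∑ j, a j * (x j - μ j))) := fun x => by
    have h1 := soft_bound_a (σ * t) m (∑ j, a j * (x j - μ j)) hl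
    have h2 := sq_le_exp σ (∑ j, a j * (x j - μ j)) hσ
    linarith
  have bb : ∀ x : Fin d → ℝ, (softThresh (σ * t) (m + ∑ j, a j * (x j - μ j)) - m) ^ 2 ≤
      8 * m ^ 2 + 2 * σ ^ 2 * Real.exp (-t ^ 2) * (Real.exp (t / σ * ∑ j, a j * (x j - μ j)) +
        Real.exp (-(t / σ) * ∑ j, a j * (x j - μ j))) := fun x => by
    have h1 := soft_bound_b (σ * t) m (∑ j, a j * (x j - μ j)) hl
    have h2 := soft_sq_le σ t (∑ j, a j * (x j - μ j)) hσ (by linarith) ht0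
    linarith
  obtain ⟨i1, e1⟩ := gauss_mgf d μ a σ (1 / σ) ha
  obtain ⟨i2, e2⟩ := gauss_mgf d μ a σ (-(1 / σ)) ha
  obtain ⟨i3, e3⟩ := gauss_mgf d μ a σ (t / σ) ha
  obtain ⟨i4, e4⟩ := gauss_mgf d μ a σ (-(t / σ)) ha
  have s1 : (1 / σ) ^ 2 * σ ^ 2 / 2 = 1 / 2 := by field_simp
  have s3 : (t / σ) ^ 2 * σ ^ 2 / 2 = L := by
    have : (t / σ) ^ 2 * σ ^ 2 / 2 = t ^ 2 / 2 := by field_simp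
    rw [this, ht2]; ring
  rw [neg_sq, s1] at e2
  rw [neg_sq, s3] at e4
  rw [s1] at e1
  rw [s3] at e3
  have ia := ((integrable_const (2 * (σ * t) ^ 2) (μ := P))).add ((i1.add i2).const_mul (4 * σ ^ 2))
  have ib := ((integrable_const (8 * m ^ 2) (μ := P))).add
    ((i3.add i4).const_mul (2 * σ ^ 2 * Real.exp (-t ^ 2)))
  have hint : Integrable (fun x => (softThresh (σ * t) (m + ∑ j, a j * (x j - μ j)) - m) ^ 2) P := by
    refine ia.mono' ?_ (Filter.Eventually.of_forall fun x => ?_)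
    · simp_rw [soft_eq _ _ hl]
      refine Measurable.aestronglyMeasurable ?_
      fun_prop
    · rw [Real.norm_of_nonneg (sq_nonneg _)]
      exact ba x
  refine ⟨hint, ?_, ?_⟩
  · refine (integral_mono hint ia ba).trans ?_
    refine (int_affine P _ _ i1 i2 _ _).trans_le ?_
    rw [e1, e2]
    have hexp : Real.exp (1 / 2) ≤ 2 := by
      have h := Real.exp_one_lt_d9
      have h2 : Real.exp (1 / 2) * Real.exp (1 / 2) = Real.exp 1 := by
        rw [← Real.exp_add]; norm_num
      nlinarith [Real.exp_pos (1 / 2)]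
    have : (σ * t) ^ 2 = σ ^ 2 * (2 * L) := by rw [mul_pow, ht2]
    rw [this]
    have hs2 : 0 < σ ^ 2 := by positivity
    nlinarith [mul_le_mul_of_nonneg_left hexp hs2.le, mul_le_mul_of_nonneg_left hL hs2.le]
  · refine (integral_mono hint ib bb).trans ?_
    refine (int_affine P _ _ i3 i4 _ _).trans_le ?_
    rw [e3, e4]
    have h1 : Real.exp L = d := Real.exp_log (by linarith)
    have h2 : Real.exp (-t ^ 2) = ((d : ℝ) * d)⁻¹ := by
      rw [ht2, Real.exp_neg, two_mul, Real.exp_add, h1]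
    rw [h1, h2]
    apply le_of_eq
    field_simp
    ring

lemma sum_bound (s c₁ c₂ : ℝ) (hs : 1 / 2 < s) (d : ℕ) (hd : 4 ≤ d)
    (σ : ℝ) (hσ : 0 < σ) (hσ1 : σ ≤ c₁) (z : Fin d → ℝ) (B : Fin d → ℝ)
    (e : Equiv.Perm (Fin d)) (hz : ∀ r : Fin d, |z (e r)| ≤ c₂ * ((r : ℝ) + 1) ^ (-s))
    (h1 : ∀ i, B i ≤ 20 * σ ^ 2 * Real.log d) (h2 : ∀ i, B i ≤ 8 * z i ^ 2 + 4 * σ ^ 2 / d) :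
    ∑ i, B i ≤ ((20 + 8 * c₂ ^ 2) * (2 ^ (2 * s) / (2 * s - 1)) + 4 * c₁ ^ (1 / s)) *
      σ ^ (2 - 1 / s) * Real.log d := by
  have hd' : (4 : ℝ) ≤ d := by exact_mod_cast hd
  have hL : 1 ≤ Real.log d := by
    rw [Real.le_log_iff_exp_le (by linarith)]
    linarith [Real.exp_one_lt_d9]
  set L := Real.log d with hLdef
  set N := σ ^ (-(1 / s)) with hN
  have hNpos : 0 < N := by positivity
  have hs0 : 0 < s := by linarith
  have hNp : N ^ (2 * s) * σ ^ 2 = 1 := by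
    rw [hN, ← Real.rpow_mul hσ.le, ← Real.rpow_natCast σ 2, ← Real.rpow_add hσ]
    have : -(1 / s) * (2 * s) + ((2 : ℕ) : ℝ) = 0 := by push_cast; field_simp; ring
    rw [this, Real.rpow_zero]
  have hNs : σ ^ 2 * N = σ ^ (2 - 1 / s) := by
    rw [hN, ← Real.rpow_natCast σ 2, ← Real.rpow_add hσ]
    congr 1
  rw [← Equiv.sum_comp e]
  have key : ∀ r : Fin d, B (e r) ≤ (20 + 8 * c₂ ^ 2) * σ ^ 2 * L *
      min 1 (((r : ℝ) + 1) ^ (-(2 * s)) * N ^ (2 * s)) + 4 * σ ^ 2 / d := by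
    intro r
    have hq : 0 ≤ 4 * σ ^ 2 / d := by positivity
    have hsL : 0 ≤ σ ^ 2 * L := by positivity
    rcases min_cases 1 (((r : ℝ) + 1) ^ (-(2 * s)) * N ^ (2 * s)) with h | h
    · rw [h.1]
      have := h1 (e r)
      nlinarith [mul_nonneg (sq_nonneg c₂) hsL]
    · rw [h.1]
      have hb := h2 (e r)
      have hr : ((r : ℝ) + 1) ^ (-(2 * s)) = (((r : ℝ) + 1) ^ (-s)) ^ 2 := by
        rw [← Real.rpow_natCast (((r : ℝ) + 1) ^ (-s)) 2, ← Real.rpow_mul (by positivity)]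
        congr 1; push_cast; ring
      have hz2 : z (e r) ^ 2 ≤ c₂ ^ 2 * ((r : ℝ) + 1) ^ (-(2 * s)) := by
        rw [hr, ← mul_pow, ← sq_abs]
        exact pow_le_pow_left₀ (abs_nonneg _) (hz r) 2
      have hR : 0 ≤ ((r : ℝ) + 1) ^ (-(2 * s)) := by positivity
      have : (20 + 8 * c₂ ^ 2) * σ ^ 2 * L * (((r : ℝ) + 1) ^ (-(2 * s)) * N ^ (2 * s)) =
          (20 + 8 * c₂ ^ 2) * L * ((r : ℝ) + 1) ^ (-(2 * s)) * (N ^ (2 * s) * σ ^ 2) := by ring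
      rw [this, hNp, mul_one]
      generalize ((r : ℝ) + 1) ^ (-(2 * s)) = R at *
      have hc : 0 ≤ c₂ ^ 2 * R := by positivity
      nlinarith [mul_le_mul_of_nonneg_left hL hc, mul_nonneg hR (by linarith : 0 ≤ L)]
  refine (Finset.sum_le_sum fun r _ => key r).trans ?_
  rw [Finset.sum_add_distrib, ← Finset.mul_sum]
  simp only [Finset.sum_const, Finset.card_univ, Fintype.card_fin, nsmul_eq_mul]
  have hm := sum_min (2 * s) N (by linarith) hNpos d
  have hA : 0 ≤ (20 + 8 * c₂ ^ 2) * σ ^ 2 * L := by positivity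
  have hm2 := mul_le_mul_of_nonneg_left hm hA
  have h4 : (d : ℝ) * (4 * σ ^ 2 / d) = 4 * σ ^ 2 := by field_simp
  have h5 : σ ^ 2 ≤ c₁ ^ (1 / s) * σ ^ (2 - 1 / s) := by
    have : σ ^ 2 = σ ^ (1 / s) * σ ^ (2 - 1 / s) := by
      rw [← Real.rpow_add hσ, ← Real.rpow_natCast σ 2]; congr 1; push_cast; ring
    rw [this]
    gcongr
  have h6 : c₁ ^ (1 / s) * σ ^ (2 - 1 / s) ≤ c₁ ^ (1 / s) * σ ^ (2 - 1 / s) * L := by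
    have : 0 ≤ c₁ ^ (1 / s) * σ ^ (2 - 1 / s) := (sq_nonneg σ).trans h5
    nlinarith
  rw [h4]
  have h7 : (20 + 8 * c₂ ^ 2) * σ ^ 2 * L * (2 ^ (2 * s) / (2 * s - 1) * N) =
      (20 + 8 * c₂ ^ 2) * (2 ^ (2 * s) / (2 * s - 1)) * σ ^ (2 - 1 / s) * L := by
    rw [← hNs]; ring
  rw [h7] at hm2
  linarith

/-- For `s > 1/2` there is a constant `K` (depending only on `s, c₁, c₂`)
such that for all `d ≥ 4`, `0 < σ ≤ c₁`, orthogonal `F`, and `μ` with `Fμ` having sorted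
coefficients decaying as `r^{−s}`, the tight frame soft-thresholding
`Φ(x) = Fᵀ ρ_t(F x)` at threshold `λ = σ √(2 log d)` applied to `x ~ N(μ, σ² I_d)`
satisfies `E[‖Φ(x) − μ‖²] ≤ K σ^{2−1/s} log d` and `‖E[Φ(x)] − μ‖² ≤ K σ^{2−1/s} log d`. -/
theorem tight_frame_soft_thresholding_estimates
    (s c₁ c₂ : ℝ) (hs : 1 / 2 < s) (hc₁ : 0 < c₁) (hc₂ : 0 < c₂) :
    ∃ K > 0, ∀ d : ℕ, 4 ≤ d → ∀ σ : ℝ, 0 < σ → σ ≤ c₁ →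
      ∀ F : Matrix (Fin d) (Fin d) ℝ, Fᵀ * F = 1 →
      ∀ μ : Fin d → ℝ, sortedDecay s c₁ c₂ (F.mulVec μ) →
      ∀ Φ : (Fin d → ℝ) → (Fin d → ℝ),
        Φ = (fun x => Fᵀ.mulVec fun i =>
          softThresh (σ * Real.sqrt (2 * Real.log d)) (F.mulVec x i)) →
        (∫ x, ∑ i, (Φ x i - μ i) ^ 2 ∂(gaussPi d μ σ) ≤ K * σ ^ (2 - 1 / s) * Real.log d) ∧
        (∑ i, ((∫ x, Φ x ∂(gaussPi d μ σ)) i - μ i) ^ 2 ≤ K * σ ^ (2 - 1 / s) * Real.log d) := by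
  have hs0 : 0 < 2 * s - 1 := by linarith
  refine ⟨(20 + 8 * c₂ ^ 2) * (2 ^ (2 * s) / (2 * s - 1)) + 4 * c₁ ^ (1 / s), by positivity, ?_⟩
  intro d hd σ hσ hσ1 F hF μ hdec Φ hΦ
  obtain ⟨e, -, he⟩ := hdec
  have hF' : F * Fᵀ = 1 := mul_eq_one_comm.1 hF
  have : IsProbabilityMeasure (gaussPi d μ σ) := by unfold gaussPi; infer_instance
  have hrow : ∀ i, ∑ j, F i j ^ 2 = 1 := by
    intro i
    have := congrFun (congrFun hF' i) i
    simp only [Matrix.mul_apply, Matrix.transpose_apply, Matrix.one_apply_eq] at this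
    simpa [sq] using this
  set l := σ * Real.sqrt (2 * Real.log d) with hl
  have hl0 : 0 ≤ l := by positivity
  set z := F.mulVec μ with hz
  set G : Fin d → (Fin d → ℝ) → ℝ := fun i x => (softThresh l (F.mulVec x i) - z i) ^ 2 with hG
  have hGeq : ∀ i, G i = fun x => (softThresh l (z i + ∑ j, F i j * (x j - μ j)) - z i) ^ 2 := by
    intro i
    funext x
    have : F.mulVec x i = z i + ∑ j, F i j * (x j - μ j) := by
      simp only [hz, Matrix.mulVec, dotProduct, mul_sub, Finset.sum_sub_distrib]
      ring
    simp only [hG, this]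
  have hrisk := fun i => coord_risk d hd μ (F i) σ (z i) hσ (hrow i)
  have hGi : ∀ i, Integrable (G i) (gaussPi d μ σ) := fun i => by
    rw [hGeq i]; exact (hrisk i).1
  have hsum : ∀ x, ∑ i, (Φ x i - μ i) ^ 2 = ∑ i, G i x := by
    intro x
    set v : Fin d → ℝ := (fun i => softThresh l (F.mulVec x i)) - z with hv
    have hμ : Fᵀ.mulVec z = μ := by rw [hz, Matrix.mulVec_mulVec, hF, Matrix.one_mulVec]
    have h1 : Φ x - μ = Fᵀ.mulVec v := by
      rw [hv, Matrix.mulVec_sub, hμ, hΦ]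
    have h2 : Fᵀ.mulVec v ⬝ᵥ Fᵀ.mulVec v = v ⬝ᵥ v := by
      rw [Matrix.dotProduct_mulVec, Matrix.vecMul_transpose, Matrix.mulVec_mulVec, hF',
        Matrix.one_mulVec]
    rw [← h1] at h2
    simpa [dotProduct, sq, hG, hv] using h2
  have hint : Integrable (fun x => ∑ i, (Φ x i - μ i) ^ 2) (gaussPi d μ σ) := by
    simp_rw [hsum]
    exact integrable_finsetSum _ fun i _ => hGi i
  have main : ∫ x, ∑ i, (Φ x i - μ i) ^ 2 ∂(gaussPi d μ σ) ≤
      ((20 + 8 * c₂ ^ 2) * (2 ^ (2 * s) / (2 * s - 1)) + 4 * c₁ ^ (1 / s)) *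
      σ ^ (2 - 1 / s) * Real.log d := by
    simp_rw [hsum]
    rw [integral_finsetSum _ fun i _ => hGi i]
    refine sum_bound s c₁ c₂ hs d hd σ hσ hσ1 z _ e (fun r => (he r).2) (fun i => ?_) (fun i => ?_)
    · rw [hGeq i]; exact (hrisk i).2.1
    · rw [hGeq i]; exact (hrisk i).2.2
  refine ⟨main, le_trans ?_ main⟩
  have hmeas : ∀ i, Measurable fun x => Φ x i - μ i := by
    intro i
    rw [hΦ]
    simp only [Matrix.mulVec, dotProduct, soft_eq _ _ hl0]
    fun_prop
  have hsqi : ∀ i, Integrable (fun x => (Φ x i - μ i) ^ 2) (gaussPi d μ σ) := by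
    intro i
    refine hint.mono' ((hmeas i).pow_const 2).aestronglyMeasurable
      (Filter.Eventually.of_forall fun x => ?_)
    rw [Real.norm_of_nonneg (sq_nonneg _)]
    exact Finset.single_le_sum (f := fun i => (Φ x i - μ i) ^ 2) (fun _ _ => sq_nonneg _)
      (Finset.mem_univ i)
  have hL2 : ∀ i, MemLp (fun x => Φ x i - μ i) 2 (gaussPi d μ σ) := fun i =>
    (memLp_two_iff_integrable_sq (hmeas i).aestronglyMeasurable).2 (hsqi i)
  have hi1 : ∀ i, Integrable (fun x => Φ x i - μ i) (gaussPi d μ σ) := fun i =>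
    (hL2 i).integrable (by norm_num)
  have hi : ∀ i, Integrable (fun x => Φ x i) (gaussPi d μ σ) := fun i => by
    have h : (fun x => Φ x i) = fun x => (Φ x i - μ i) + μ i := by
      funext x; ring
    rw [h]
    exact (hi1 i).add (integrable_const (μ i))
  rw [integral_finsetSum _ fun i _ => hsqi i]
  refine Finset.sum_le_sum fun i _ => ?_
  rw [eval_integral hi i]
  have h1 : ∫ x, (Φ x i - μ i) ∂(gaussPi d μ σ) = ∫ x, Φ x i ∂(gaussPi d μ σ) - μ i := by
    rw [integral_sub (hi i) (integrable_const _)]; simp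
  have h2 := variance_nonneg (fun x => Φ x i - μ i) (gaussPi d μ σ)
  rw [variance_eq_sub (hL2 i), h1] at h2
  simp only [Pi.pow_apply] at h2
  linarith
end

section
/- Let s > 1/2 and C₁, C₂ > 0. There exists a constant K > 0, depending only on s, C₁ and C₂, such that the following holds. Let d ≥ 4, 0 < σ ≤ C₁, F ∈ ℝ^{d×d} orthogonal, and for each class c ∈ {1, …, C} let ν_c = ∑_{k=1}^{K_c} π_{c,k} N(μ_{c,k}, σ² I_d) be a Gaussian mixture with π_{c,k} ≥ 0, ∑_k π_{c,k} = 1, class mean μ_c = ∑_k π_{c,k} μ_{c,k}, and suppose every mixture center satisfies the decay condition C₁ r^{−s} ≤ |(F μ_{c,k})^{(r)}| ≤ C₂ r^{−s} for all 1 ≤ r ≤ d. Let Φ(x) = Fᵀ ρ_t(F x) with soft-threshold λ = σ √(2 log d) and μ̄_c = ∫ Φ(x) dν_c(x). Then for every class c, ‖μ_c − μ̄_c‖² ≤ K σ^{2 − 1/s} log d. -/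
open Matrix MeasureTheory ProbabilityTheory

lemma aux_soft (lam : ℝ) (hl : 0 ≤ lam) (u : ℝ) :
    softThresh lam u = max (u - lam) 0 - max (-u - lam) 0 := by
  unfold softThresh
  rcases lt_trichotomy u 0 with h | h | h
  · rw [Real.sign_of_neg h, abs_of_neg h, max_eq_right (a := u - lam) (by linarith)]; ring
  · subst h; simp
  · rw [Real.sign_of_pos h, abs_of_pos h, max_eq_right (a := -u - lam) (by linarith)]; ring

lemma aux_sym (lam : ℝ) (hl : 0 ≤ lam) (z y : ℝ) :
    |softThresh lam y + softThresh lam (2 * z - y) - 2 * z| ≤ 2 * min |z| lam := by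
  rw [aux_soft lam hl, aux_soft lam hl]
  have h1 : |max (y - lam) 0 - max (-y - lam) 0 +
      (max (2 * z - y - lam) 0 - max (-(2 * z - y) - lam) 0) - 2 * z| ≤ 2 * |z| := by
    rw [abs_le]
    rcases abs_cases z with ⟨h, _⟩ | ⟨h, _⟩ <;> rw [h] <;>
    rcases max_cases (y - lam) 0 with ⟨h1, _⟩ | ⟨h1, _⟩ <;> rw [h1] <;>
    rcases max_cases (-y - lam) 0 with ⟨h2, _⟩ | ⟨h2, _⟩ <;> rw [h2] <;>
    rcases max_cases (2 * z - y - lam) 0 with ⟨h3, _⟩ | ⟨h3, _⟩ <;> rw [h3] <;>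
    rcases max_cases (-(2 * z - y) - lam) 0 with ⟨h4, _⟩ | ⟨h4, _⟩ <;> rw [h4] <;>
    constructor <;> linarith
  have h2 : |max (y - lam) 0 - max (-y - lam) 0 +
      (max (2 * z - y - lam) 0 - max (-(2 * z - y) - lam) 0) - 2 * z| ≤ 2 * lam := by
    rw [abs_le]
    rcases max_cases (y - lam) 0 with ⟨h1, _⟩ | ⟨h1, _⟩ <;> rw [h1] <;>
    rcases max_cases (-y - lam) 0 with ⟨h2, _⟩ | ⟨h2, _⟩ <;> rw [h2] <;>
    rcases max_cases (2 * z - y - lam) 0 with ⟨h3, _⟩ | ⟨h3, _⟩ <;> rw [h3] <;>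
    rcases max_cases (-(2 * z - y) - lam) 0 with ⟨h4, _⟩ | ⟨h4, _⟩ <;> rw [h4] <;>
    constructor <;> linarith
  rcases min_cases |z| lam with ⟨h, _⟩ | ⟨h, _⟩ <;> rw [h] <;> assumption

lemma aux_soft_cont (lam : ℝ) (hl : 0 ≤ lam) : Continuous (softThresh lam) := by
  have : softThresh lam = fun u => max (u - lam) 0 - max (-u - lam) 0 :=
    funext (aux_soft lam hl)
  rw [this]; fun_prop

lemma aux_soft_le (lam : ℝ) (hl : 0 ≤ lam) (u : ℝ) : |softThresh lam u| ≤ |u| := by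
  rw [aux_soft lam hl, abs_le]
  rcases abs_cases u with ⟨h, _⟩ | ⟨h, _⟩ <;> rw [h] <;>
  rcases max_cases (u - lam) 0 with ⟨h1, _⟩ | ⟨h1, _⟩ <;> rw [h1] <;>
  rcases max_cases (-u - lam) 0 with ⟨h2, _⟩ | ⟨h2, _⟩ <;> rw [h2] <;>
  constructor <;> linarith

instance aux_prob (d : ℕ) (m : Fin d → ℝ) (σ : ℝ) : IsProbabilityMeasure (gaussPi d m σ) := by
  unfold gaussPi; infer_instance

lemma aux_refl (d : ℕ) (m : Fin d → ℝ) (σ : ℝ) :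
    MeasurePreserving (fun x : Fin d → ℝ => fun i => 2 * m i - x i)
      (gaussPi d m σ) (gaussPi d m σ) := by
  unfold gaussPi
  refine measurePreserving_pi (f := fun i t => 2 * m i - t) _ _ fun i => ⟨by fun_prop, ?_⟩
  rw [gaussianReal_map_const_sub]
  congr 1; ring

lemma aux_int_coord (d : ℕ) (m : Fin d → ℝ) (σ : ℝ) (i : Fin d) :
    Integrable (fun x : Fin d → ℝ => x i) (gaussPi d m σ) := by
  have h := measurePreserving_eval
    (fun i => gaussianReal (m i) (Real.toNNReal (σ ^ 2))) i
  have h2 : Integrable (id : ℝ → ℝ) (gaussianReal (m i) (Real.toNNReal (σ ^ 2))) :=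
    memLp_one_iff_integrable.1 (memLp_id_gaussianReal' 1 (by simp))
  exact h.integrable_comp_of_integrable h2

lemma aux_int_soft (d : ℕ) (m : Fin d → ℝ) (σ lam : ℝ) (hl : 0 ≤ lam)
    (F : Matrix (Fin d) (Fin d) ℝ) (i : Fin d) :
    Integrable (fun x : Fin d → ℝ => softThresh lam (F.mulVec x i)) (gaussPi d m σ) := by
  have h : Integrable (fun x : Fin d → ℝ => F.mulVec x i) (gaussPi d m σ) := by
    simp only [Matrix.mulVec, dotProduct]
    exact integrable_finsetSum _ fun j _ => (aux_int_coord d m σ j).const_mul _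
  refine h.mono ?_ (Filter.Eventually.of_forall fun x => ?_)
  · refine Continuous.aestronglyMeasurable ?_
    refine (aux_soft_cont lam hl).comp ?_
    simp only [Matrix.mulVec, dotProduct]
    fun_prop
  · simpa using aux_soft_le lam hl _

lemma aux_bias (d : ℕ) (m : Fin d → ℝ) (σ lam : ℝ) (hl : 0 ≤ lam)
    (F : Matrix (Fin d) (Fin d) ℝ) (i : Fin d) :
    |(∫ x, softThresh lam (F.mulVec x i) ∂(gaussPi d m σ)) - F.mulVec m i|
      ≤ min |F.mulVec m i| lam := by
  set I := ∫ x, softThresh lam (F.mulVec x i) ∂(gaussPi d m σ) with hI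
  have hint := aux_int_soft d m σ lam hl F i
  have hre : ∀ x : Fin d → ℝ, F.mulVec (fun i => 2 * m i - x i) i
      = 2 * F.mulVec m i - F.mulVec x i := by
    intro x
    simp only [Matrix.mulVec, dotProduct, Finset.mul_sum, ← Finset.sum_sub_distrib]
    exact Finset.sum_congr rfl fun j _ => by ring
  have hint2 : Integrable (fun x : Fin d → ℝ =>
      softThresh lam (2 * F.mulVec m i - F.mulVec x i)) (gaussPi d m σ) := by
    have := (aux_refl d m σ).integrable_comp_of_integrable hint
    simpa only [Function.comp_def, hre] using this
  have hI2 : ∫ x, softThresh lam (2 * F.mulVec m i - F.mulVec x i) ∂(gaussPi d m σ) = I := by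
    simp only [← hre]
    have hh := (aux_refl d m σ)
    have := integral_map (μ := gaussPi d m σ) hh.measurable.aemeasurable
      (f := fun x => softThresh lam (F.mulVec x i)) (by rw [hh.map_eq]; exact hint.1)
    rw [hh.map_eq] at this
    exact this.symm
  have key : 2 * (I - F.mulVec m i) = ∫ x, (softThresh lam (F.mulVec x i)
      + softThresh lam (2 * F.mulVec m i - F.mulVec x i) - 2 * F.mulVec m i) ∂(gaussPi d m σ) := by
    rw [integral_sub (hint.fun_add hint2) (integrable_const _), integral_add hint hint2, hI2]
    simp; ring
  have hb := norm_integral_le_of_norm_le_const (μ := gaussPi d m σ)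
    (f := fun x => softThresh lam (F.mulVec x i)
      + softThresh lam (2 * F.mulVec m i - F.mulVec x i) - 2 * F.mulVec m i)
    (C := 2 * min |F.mulVec m i| lam)
    (Filter.Eventually.of_forall fun x => aux_sym lam hl (F.mulVec m i) (F.mulVec x i))
  rw [← key] at hb
  rw [Real.norm_eq_abs, abs_mul, abs_of_pos (by norm_num : (0 : ℝ) < 2), probReal_univ,
    mul_one] at hb
  linarith

lemma aux_tele (q : ℝ) (hq : 0 < q) (x : ℝ) (hx : 0 < x) :
    q * (x + 1) ^ (-(q + 1)) ≤ x ^ (-q) - (x + 1) ^ (-q) := by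
  have hx1 : 0 < x + 1 := by linarith
  have h1 : (x + 1) ^ (-(q + 1)) = (x + 1) ^ (-q) * (x + 1)⁻¹ := by
    rw [neg_add, Real.rpow_add hx1, Real.rpow_neg_one]
  have h2 : x ^ (-q) = (x + 1) ^ (-q) * (x / (x + 1)) ^ (-q) := by
    rw [← Real.mul_rpow hx1.le (by positivity)]
    congr 1; field_simp
  have h3 : 1 + q * (x + 1)⁻¹ ≤ (x / (x + 1)) ^ (-q) := by
    have hp : 0 < x / (x + 1) := by positivity
    rw [Real.rpow_def_of_pos hp]
    have hlog := Real.log_le_sub_one_of_pos hp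
    have he : x / (x + 1) - 1 = - (x + 1)⁻¹ := by field_simp; ring
    rw [he] at hlog
    have := Real.add_one_le_exp (Real.log (x / (x + 1)) * -q)
    nlinarith
  have hpos : 0 < (x + 1) ^ (-q) := by positivity
  rw [h1, h2]
  nlinarith

lemma aux_sum (s C lam : ℝ) (hs : 1 / 2 < s) (hC : 0 < C) (hl : 0 < lam) (d : ℕ) (a : ℕ → ℝ)
    (ha1 : ∀ r < d, a r ≤ lam ^ 2)
    (ha2 : ∀ r < d, a r ≤ C ^ 2 * ((r : ℝ) + 1) ^ (-(2 * s))) :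
    ∑ r ∈ Finset.range d, a r
      ≤ (2 + 1 / (2 * s - 1)) * (C ^ (1 / s) * lam ^ (2 - 1 / s)) := by
  have hs0 : 0 < s := by linarith
  set q := 2 * s - 1 with hqdef
  have hq : 0 < q := by linarith
  set Q := C ^ (1 / s) * lam ^ (2 - 1 / s) with hQ
  have hexp : 0 < 2 - 1 / s := by
    have : 1 / s < 2 := by rw [div_lt_iff₀ hs0]; linarith
    linarith
  set A := (C / lam) ^ (1 / s) with hA
  have hA0 : 0 < A := by positivity
  have hAQ : lam ^ 2 * A = Q := by
    rw [hA, hQ, Real.div_rpow hC.le hl.le, Real.rpow_sub hl, Real.rpow_two]; ring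
  have hAQ2 : C ^ 2 * A ^ (-q) = Q := by
    rw [hA, ← Real.rpow_mul (by positivity)]
    have : 1 / s * -q = 1 / s - 2 := by rw [hqdef]; field_simp; ring
    rw [this, hQ, Real.div_rpow hC.le hl.le, Real.rpow_sub hC, Real.rpow_sub hl,
      Real.rpow_sub hl, Real.rpow_two, Real.rpow_two]
    field_simp
  set n := ⌈A⌉₊ with hn
  have hn1 : 1 ≤ n := Nat.one_le_iff_ne_zero.2 (Nat.ceil_pos.2 hA0).ne'
  have hnA : A ≤ n := Nat.le_ceil A
  set M := min (lam ^ 2) (C ^ 2) with hM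
  have hM0 : 0 ≤ M := by positivity
  have haM : ∀ r < d, a r ≤ M := by
    intro r hr
    refine le_min (ha1 r hr) ((ha2 r hr).trans ?_)
    have : ((r : ℝ) + 1) ^ (-(2 * s)) ≤ 1 :=
      Real.rpow_le_one_of_one_le_of_nonpos (by linarith [Nat.cast_nonneg (α := ℝ) r]) (by linarith)
    nlinarith [sq_nonneg C]
  have hMn : M * n ≤ 2 * Q := by
    rcases le_or_gt 1 A with h | h
    · have : (n : ℝ) ≤ 2 * A := by linarith [Nat.ceil_lt_add_one hA0.le]
      calc M * n ≤ lam ^ 2 * (2 * A) := by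
            apply mul_le_mul (min_le_left _ _) this <;> positivity
        _ = 2 * Q := by rw [← hAQ]; ring
    · have h1 : n = 1 := le_antisymm (Nat.ceil_le.2 (by simpa using h.le)) hn1
      have h2 : C ^ 2 ≤ Q := by
        rw [← hAQ2]
        have : 1 ≤ A ^ (-q) := Real.one_le_rpow_of_pos_of_le_one_of_nonpos hA0 h.le (by linarith)
        nlinarith [sq_nonneg C]
      rw [h1]; push_cast
      have := min_le_right (lam ^ 2) (C ^ 2)
      have : 0 < Q := by positivity
      linarith
  have hsmall : ∀ k ≤ d, ∑ r ∈ Finset.range k, a r ≤ M * k := by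
    intro k hk
    have := Finset.sum_le_card_nsmul (Finset.range k) a M
      (fun r hr => haM r ((Finset.mem_range.1 hr).trans_le hk))
    simpa [mul_comm] using this
  have hbig : ∀ k, n ≤ k → k ≤ d → ∑ r ∈ Finset.range k, a r
      ≤ M * n + C ^ 2 / q * ((n : ℝ) ^ (-q) - (k : ℝ) ^ (-q)) := by
    intro k hk
    induction k, hk using Nat.le_induction with
    | base => intro h; simpa using hsmall n h
    | succ k hk ih =>
      intro h
      rw [Finset.sum_range_succ]
      have h1 := ih (by omega)
      have h2 := ha2 k (by omega)
      have hk0 : (0 : ℝ) < k := by exact_mod_cast (by omega : 0 < k)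
      have h3 := aux_tele q hq k hk0
      have e : -(2 * s) = -(q + 1) := by rw [hqdef]; ring
      rw [e] at h2
      have h4 : C ^ 2 * ((k : ℝ) + 1) ^ (-(q + 1))
          ≤ C ^ 2 / q * ((k : ℝ) ^ (-q) - ((k : ℝ) + 1) ^ (-q)) := by
        rw [div_mul_eq_mul_div, le_div_iff₀ hq]
        nlinarith [sq_nonneg C]
      push_cast
      nlinarith
  have hnq : (n : ℝ) ^ (-q) ≤ A ^ (-q) :=
    Real.rpow_le_rpow_of_nonpos hA0 hnA (by linarith)
  have hfin : C ^ 2 / q * A ^ (-q) = 1 / q * Q := by rw [← hAQ2]; ring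
  have hQ0 : 0 < Q := by positivity
  have hcq : 0 < C ^ 2 / q := by positivity
  rw [add_mul]
  rcases le_total n d with h | h
  · have h1 := hbig d h le_rfl
    have h2 : 0 ≤ (d : ℝ) ^ (-q) := by positivity
    nlinarith
  · have h1 := hsmall d le_rfl
    have h2 : M * d ≤ M * n := mul_le_mul_of_nonneg_left (by exact_mod_cast h) hM0
    have : 0 < 1 / q * Q := by positivity
    linarith

lemma aux_center (s c₁ c₂ : ℝ) (hs : 1 / 2 < s) (hc₂ : 0 < c₂) (d : ℕ) (z b : Fin d → ℝ)
    (lam : ℝ) (hl : 0 < lam) (hz : sortedDecay s c₁ c₂ z)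
    (hb : ∀ i, |b i| ≤ min |z i| lam) :
    ∑ i, b i ^ 2 ≤ (2 + 1 / (2 * s - 1)) * (c₂ ^ (1 / s) * lam ^ (2 - 1 / s)) := by
  obtain ⟨e, -, he⟩ := hz
  rw [← Equiv.sum_comp e]
  have := aux_sum s c₂ lam hs hc₂ hl d (fun r => if h : r < d then b (e ⟨r, h⟩) ^ 2 else 0) ?_ ?_
  · rw [Finset.sum_range] at this
    simpa using this
  · intro r hr
    simp only [hr, dite_true]
    have := (hb (e ⟨r, hr⟩)).trans (min_le_right _ _)
    rw [← sq_abs]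
    exact pow_le_pow_left₀ (abs_nonneg _) this 2
  · intro r hr
    simp only [hr, dite_true]
    have h1 := ((hb (e ⟨r, hr⟩)).trans (min_le_left _ _)).trans (he ⟨r, hr⟩).2
    rw [← sq_abs]
    refine (pow_le_pow_left₀ (abs_nonneg _) h1 2).trans (le_of_eq ?_)
    have hp : (0 : ℝ) ≤ (r : ℝ) + 1 := by positivity
    rw [mul_pow, ← Real.rpow_two ((_ : ℝ) ^ (-s)), ← Real.rpow_mul hp]
    congr 2; ring

lemma aux_iso {d : ℕ} (F : Matrix (Fin d) (Fin d) ℝ) (hF : Fᵀ * F = 1) (v : Fin d → ℝ) :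
    ∑ i, v i ^ 2 = ∑ i, (F.mulVec v i) ^ 2 := by
  have h : F.mulVec v ⬝ᵥ F.mulVec v = v ⬝ᵥ v := by
    rw [Matrix.dotProduct_mulVec, ← Matrix.mulVec_transpose, Matrix.mulVec_mulVec, hF,
      Matrix.one_mulVec]
  simp only [dotProduct, ← sq] at h
  exact h.symm

/-- Class-mean displacement bound.  For Gaussian mixture classes
`ν_c = ∑_k π_{c,k} N(μ_{c,k}, σ² I_d)` whose centers all satisfy the decay condition in
the orthogonal basis `F`, the tight frame soft-thresholding `Φ(x) = Fᵀ ρ_t(F x)` with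
`λ = σ √(2 log d)` moves each class mean by at most `K σ^{2−1/s} log d` (squared norm). -/
theorem class_mean_displacement_bound
    (s c₁ c₂ : ℝ) (hs : 1 / 2 < s) (hc₁ : 0 < c₁) (hc₂ : 0 < c₂) :
    ∃ K > 0, ∀ d : ℕ, 4 ≤ d → ∀ σ : ℝ, 0 < σ → σ ≤ c₁ →
      ∀ F : Matrix (Fin d) (Fin d) ℝ, Fᵀ * F = 1 →
      ∀ C : ℕ, 0 < C →
      ∀ (Kc : Fin C → ℕ) (w : (c : Fin C) → Fin (Kc c) → ℝ)
        (μmix : (c : Fin C) → Fin (Kc c) → Fin d → ℝ),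
        (∀ c k, 0 ≤ w c k) → (∀ c, ∑ k, w c k = 1) →
        (∀ c k, sortedDecay s c₁ c₂ (F.mulVec (μmix c k))) →
      ∀ ν : Fin C → Measure (Fin d → ℝ),
        (∀ c, ν c = ∑ k, ENNReal.ofReal (w c k) • gaussPi d (μmix c k) σ) →
      ∀ Φ : (Fin d → ℝ) → (Fin d → ℝ),
        Φ = (fun x => Fᵀ.mulVec fun i =>
          softThresh (σ * Real.sqrt (2 * Real.log d)) (F.mulVec x i)) →
      ∀ (μcl : Fin C → Fin d → ℝ), (∀ c, μcl c = ∑ k, w c k • μmix c k) →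
      ∀ (μb : Fin C → Fin d → ℝ), (∀ c, μb c = ∫ x, Φ x ∂ν c) →
      ∀ c : Fin C,
        ∑ i, (μcl c i - μb c i) ^ 2 ≤ K * σ ^ (2 - 1 / s) * Real.log d := by
  have hs0 : 0 < s := by linarith
  have hq : 0 < 2 * s - 1 := by linarith
  refine ⟨(2 + 1 / (2 * s - 1)) * c₂ ^ (1 / s) * 2, by positivity, ?_⟩
  intro d hd σ hσ _ F hF C _ Kc w μmix hw hw1 hdec ν hν Φ hΦ μcl hμcl μb hμb c
  set L := 2 * Real.log d with hL
  have hd4 : (4 : ℝ) ≤ d := by exact_mod_cast hd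
  have hL1 : 1 ≤ L := by
    have h1 : Real.log 2 ≤ Real.log d := Real.log_le_log (by norm_num) (by linarith)
    have := Real.log_two_gt_d9
    rw [hL]; linarith
  set lam := σ * Real.sqrt L with hlam
  have hsq : 0 < Real.sqrt L := Real.sqrt_pos.2 (by linarith)
  have hl : 0 < lam := by positivity
  -- the vectors of coefficient expectations
  set h : (Fin d → ℝ) → (Fin d → ℝ) := fun x i => softThresh lam (F.mulVec x i) with hh
  have hint : ∀ k, Integrable h (gaussPi d (μmix c k) σ) := fun k =>
    Integrable.of_eval fun i => aux_int_soft d _ σ lam hl.le F i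
  have hintw : ∀ k, Integrable h (ENNReal.ofReal (w c k) • gaussPi d (μmix c k) σ) := fun k =>
    (hint k).smul_measure ENNReal.ofReal_ne_top
  have hintν : Integrable h (ν c) := by
    rw [hν c]
    exact integrable_finsetSum_measure.2 fun k _ => hintw k
  have hFF : F * Fᵀ = 1 := mul_eq_one_comm.1 hF
  have hμb' : μb c = Fᵀ.mulVec (∫ x, h x ∂ν c) := by
    rw [hμb c, hΦ]
    exact (LinearMap.toContinuousLinearMap (Matrix.mulVecLin Fᵀ)).integral_comp_comm hintν
  have hint2 : ∫ x, h x ∂ν c = ∑ k, w c k • ∫ x, h x ∂(gaussPi d (μmix c k) σ) := by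
    rw [hν c, integral_finsetSum_measure fun k _ => hintw k]
    refine Finset.sum_congr rfl fun k _ => ?_
    rw [integral_smul_measure, ENNReal.toReal_ofReal (hw c k)]
  set b : Fin (Kc c) → Fin d → ℝ := fun k i =>
    F.mulVec (μmix c k) i - ∫ x, softThresh lam (F.mulVec x i) ∂(gaussPi d (μmix c k) σ) with hb
  have hcoord : ∀ i, F.mulVec (μcl c - μb c) i = ∑ k, w c k * b k i := by
    intro i
    rw [Matrix.mulVec_sub, hμb', Matrix.mulVec_mulVec, hFF, Matrix.one_mulVec, hint2, hμcl c,
      Matrix.mulVec_sum]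
    simp only [Pi.sub_apply, Finset.sum_apply, Matrix.mulVec_smul, Pi.smul_apply, smul_eq_mul,
      ← Finset.sum_sub_distrib]
    refine Finset.sum_congr rfl fun k _ => ?_
    rw [eval_integral (fun i => aux_int_soft d _ σ lam hl.le F i)]
    simp only [hb, hh]; ring
  have hbk : ∀ k, ∑ i, b k i ^ 2
      ≤ (2 + 1 / (2 * s - 1)) * (c₂ ^ (1 / s) * lam ^ (2 - 1 / s)) := fun k =>
    aux_center s c₁ c₂ hs hc₂ d _ (b k) lam hl (hdec c k) fun i => by
      simp only [hb]
      rw [abs_sub_comm]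
      exact aux_bias d _ σ lam hl.le F i
  have hlamle : lam ^ (2 - 1 / s) ≤ σ ^ (2 - 1 / s) * L := by
    rw [hlam, Real.mul_rpow hσ.le hsq.le]
    refine mul_le_mul_of_nonneg_left ?_ (by positivity)
    have h1 : 1 ≤ Real.sqrt L := Real.one_le_sqrt.2 hL1
    have h2 : Real.sqrt L ^ (2 - 1 / s) ≤ Real.sqrt L ^ (2 : ℝ) :=
      Real.rpow_le_rpow_of_exponent_le h1 (by linarith [show 0 < 1 / s by positivity])
    rwa [Real.rpow_two, Real.sq_sqrt (by linarith)] at h2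
  calc ∑ i, (μcl c i - μb c i) ^ 2 = ∑ i, (F.mulVec (μcl c - μb c) i) ^ 2 :=
        aux_iso F hF (μcl c - μb c)
    _ ≤ ∑ i, ∑ k, w c k * b k i ^ 2 := by
        refine Finset.sum_le_sum fun i _ => ?_
        rw [hcoord i]
        exact Real.pow_arith_mean_le_arith_mean_pow_of_even _ _ _ (fun k _ => hw c k) (hw1 c)
          even_two
    _ = ∑ k, w c k * ∑ i, b k i ^ 2 := by
        rw [Finset.sum_comm]
        simp only [Finset.mul_sum]
    _ ≤ ∑ k, w c k * ((2 + 1 / (2 * s - 1)) * (c₂ ^ (1 / s) * lam ^ (2 - 1 / s))) :=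
        Finset.sum_le_sum fun k _ => mul_le_mul_of_nonneg_left (hbk k) (hw c k)
    _ = (2 + 1 / (2 * s - 1)) * c₂ ^ (1 / s) * lam ^ (2 - 1 / s) := by
        rw [← Finset.sum_mul, hw1 c]; ring
    _ ≤ (2 + 1 / (2 * s - 1)) * c₂ ^ (1 / s) * (σ ^ (2 - 1 / s) * L) :=
        mul_le_mul_of_nonneg_left hlamle (by positivity)
    _ = (2 + 1 / (2 * s - 1)) * c₂ ^ (1 / s) * 2 * σ ^ (2 - 1 / s) * Real.log d := by
        rw [hL]; ring
end

section
/- Fix λ ≥ 0 and an integer d ≥ 1, and let ρ_rt(u) = max(u − λ, 0). There exist a probability measure on ℝ^d admitting a density supported in the closed unit ball, a random vector x with this distribution, and a C^∞ function h : ℝ^d → ℝ, such that for every integer p ≥ d, every matrix F ∈ ℝ^{p×d} whose rows f_1, …, f_p satisfy ‖f_m‖ ≤ 1, every row vector W = (w_1, …, w_p) ∈ ℝ^{1×p}, and every b ∈ ℝ, the probability P[sign(∑_{m=1}^p w_m max(⟨f_m, x⟩ − λ, 0) + b) ≠ sign(h(x))] is at least 1/4. -/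
open MeasureTheory
open scoped RealInnerProductSpace ENNReal

/-- Open shell of radii `r` and `2 r`. -/
def shellSet (d : ℕ) (r : ℝ) : Set (EuclideanSpace ℝ (Fin d)) := {x | r < ‖x‖ ∧ ‖x‖ < 2 * r}

lemma isOpen_shellSet (d : ℕ) (r : ℝ) : IsOpen (shellSet d r) :=
  (isOpen_lt continuous_const continuous_norm).inter (isOpen_lt continuous_norm continuous_const)

lemma shellSet_volume_pos (d : ℕ) (hd : 1 ≤ d) (r : ℝ) (hr : 0 < r) :
    volume (shellSet d r) ≠ 0 := by
  refine ((isOpen_shellSet d r).measure_pos volume ⟨EuclideanSpace.single ⟨0, hd⟩ (3 / 2 * r), ?_⟩).ne'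
  have h : ‖(EuclideanSpace.single (⟨0, hd⟩ : Fin d) (3 / 2 * r) : EuclideanSpace ℝ (Fin d))‖
      = 3 / 2 * r := by
    rw [EuclideanSpace.norm_single, Real.norm_eq_abs, abs_of_pos (by positivity)]
  constructor <;> rw [h] <;> linarith

lemma shellSet_volume_fin (d : ℕ) (r : ℝ) : volume (shellSet d r) ≠ ∞ := by
  refine ((measure_mono ?_).trans_lt (measure_ball_lt_top (μ := volume)
    (x := (0 : EuclideanSpace ℝ (Fin d))) (r := 2 * r))).ne
  intro x hx
  simpa using hx.2

open scoped Pointwise in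
lemma shell_scale (d : ℕ) (r c : ℝ) (hc : 0 < c) (E : Set (EuclideanSpace ℝ (Fin d))) :
    volume (E ∩ shellSet d (c * r)) =
      ENNReal.ofReal (c ^ d) * volume (shellSet d r ∩ (fun x => c • x) ⁻¹' E) := by
  have h : E ∩ shellSet d (c * r) = c • (shellSet d r ∩ (fun x => c • x) ⁻¹' E) := by
    ext x
    rw [Set.mem_smul_set_iff_inv_smul_mem₀ hc.ne']
    simp only [shellSet, Set.mem_inter_iff, Set.mem_setOf_eq, Set.mem_preimage, norm_smul,
      smul_inv_smul₀ hc.ne', norm_inv, Real.norm_eq_abs, abs_of_pos hc]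
    rw [inv_mul_eq_div, lt_div_iff₀ hc, div_lt_iff₀ hc]
    constructor
    · rintro ⟨h1, h2, h3⟩
      exact ⟨⟨by linarith, by linarith⟩, h1⟩
    · rintro ⟨⟨h2, h3⟩, h1⟩
      exact ⟨h1, by linarith, by linarith⟩
  rw [h, Measure.addHaar_smul, finrank_euclideanSpace_fin, abs_of_pos (by positivity)]

/-- The density of the piece on a scaled shell. -/
noncomputable def pieceDens (d : ℕ) (r c : ℝ) : EuclideanSpace ℝ (Fin d) → ℝ≥0∞ :=
  (shellSet d (c * r)).indicator
    (fun _ => (3 * volume (shellSet d r))⁻¹ * (ENNReal.ofReal (c ^ d))⁻¹)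

lemma piece_apply (d : ℕ) (r c : ℝ) (hc : 0 < c) (E : Set (EuclideanSpace ℝ (Fin d))) :
    volume.withDensity (pieceDens d r c) E =
      (3 * volume (shellSet d r))⁻¹ * volume (shellSet d r ∩ (fun x => c • x) ⁻¹' E) := by
  have hm := (isOpen_shellSet d (c * r)).measurableSet
  rw [pieceDens, withDensity_indicator hm, withDensity_const, Measure.smul_apply,
    Measure.restrict_apply' hm, shell_scale d r c hc, smul_eq_mul, mul_assoc, ← mul_assoc _⁻¹ _ (volume _),
    ENNReal.inv_mul_cancel, one_mul]
  · simpa using pow_pos hc d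
  · exact ENNReal.ofReal_ne_top

lemma piece_meas (d : ℕ) (r c : ℝ) : Measurable (pieceDens d r c) :=
  measurable_const.indicator (isOpen_shellSet d (c * r)).measurableSet

lemma piece_zero (d : ℕ) (r c : ℝ) (x : EuclideanSpace ℝ (Fin d)) (h : 2 * (c * r) ≤ ‖x‖) :
    pieceDens d r c x = 0 := by
  apply Set.indicator_of_notMem
  intro hx
  exact absurd hx.2 (not_lt.2 h)

/-- The total density. -/
noncomputable def totDens (d : ℕ) (r : ℝ) : EuclideanSpace ℝ (Fin d) → ℝ≥0∞ :=
  pieceDens d r 1 + (pieceDens d r 2 + pieceDens d r 4)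

lemma tot_apply (d : ℕ) (r : ℝ) (E : Set (EuclideanSpace ℝ (Fin d))) :
    volume.withDensity (totDens d r) E =
      (3 * volume (shellSet d r))⁻¹ * (volume (shellSet d r ∩ (fun x => (1 : ℝ) • x) ⁻¹' E) +
        (volume (shellSet d r ∩ (fun x => (2 : ℝ) • x) ⁻¹' E) +
          volume (shellSet d r ∩ (fun x => (4 : ℝ) • x) ⁻¹' E))) := by
  rw [totDens, withDensity_add_left (piece_meas d r 1), withDensity_add_left (piece_meas d r 2),
    Measure.add_apply, Measure.add_apply, piece_apply d r 1 one_pos, piece_apply d r 2 two_pos,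
    piece_apply d r 4 four_pos, mul_add, mul_add]

lemma net_affine (lam : ℝ) (d : ℕ) (r : ℝ)
    (hr : 8 * r ≤ lam ∨ lam = 0) (p : ℕ)
    (F : Fin p → EuclideanSpace ℝ (Fin d)) (hF : ∀ m, ‖F m‖ ≤ 1) (w : Fin p → ℝ)
    (x : EuclideanSpace ℝ (Fin d)) (hx : ‖x‖ < 2 * r) :
    ∃ G : ℝ, ∀ c : ℝ, 0 < c → c ≤ 4 →
      ∑ m, w m * max (⟪F m, c • x⟫ - lam) 0 = c * G := by
  rcases hr with hr | rfl
  · refine ⟨0, fun c hc hc4 => ?_⟩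
    rw [mul_zero]
    refine Finset.sum_eq_zero fun m _ => ?_
    have h1 := real_inner_le_norm (F m) x
    have h2 : ‖F m‖ * ‖x‖ ≤ ‖x‖ := mul_le_of_le_one_left (norm_nonneg _) (hF m)
    rw [real_inner_smul_right, max_eq_right, mul_zero]
    have : c * ⟪F m, x⟫ ≤ c * ‖x‖ := mul_le_mul_of_nonneg_left (h1.trans h2) hc.le
    have : c * ‖x‖ ≤ 4 * ‖x‖ := mul_le_mul_of_nonneg_right hc4 (norm_nonneg _)
    linarith
  · refine ⟨∑ m, w m * max ⟪F m, x⟫ 0, fun c hc _ => ?_⟩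
    rw [Finset.mul_sum]
    refine Finset.sum_congr rfl fun m _ => ?_
    rw [real_inner_smul_right, sub_zero, mul_left_comm, mul_max_of_nonneg _ _ hc.le, mul_zero]

lemma sign_pos_iff' {u v : ℝ} (hv : 0 < v) (h : Real.sign u = Real.sign v) : 0 < u := by
  rw [Real.sign_of_pos hv] at h
  rcases lt_trichotomy u 0 with hu | rfl | hu
  · rw [Real.sign_of_neg hu] at h; norm_num at h
  · rw [Real.sign_zero] at h; norm_num at h
  · exact hu

lemma sign_neg_iff' {u v : ℝ} (hv : v < 0) (h : Real.sign u = Real.sign v) : u < 0 := by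
  rw [Real.sign_of_neg hv] at h
  rcases lt_trichotomy u 0 with hu | rfl | hu
  · exact hu
  · rw [Real.sign_zero] at h; norm_num at h
  · rw [Real.sign_of_pos hu] at h; norm_num at h

theorem no_universal_approximation_bias_free
    (lam : ℝ) (hlam : 0 ≤ lam) (d : ℕ) (hd : 1 ≤ d) :
    ∃ (ν : Measure (EuclideanSpace ℝ (Fin d))) (_ : IsProbabilityMeasure ν)
      (f : EuclideanSpace ℝ (Fin d) → ℝ≥0∞) (h : EuclideanSpace ℝ (Fin d) → ℝ),
      ν = volume.withDensity f ∧
      (∀ x : EuclideanSpace ℝ (Fin d), 1 < ‖x‖ → f x = 0) ∧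
      ContDiff ℝ (⊤ : ℕ∞) h ∧
      ∀ p : ℕ, d ≤ p →
        ∀ F : Fin p → EuclideanSpace ℝ (Fin d), (∀ m, ‖F m‖ ≤ 1) →
        ∀ (w : Fin p → ℝ) (b : ℝ),
          (1 / 4 : ℝ≥0∞) ≤
            ν {x | Real.sign (∑ m, w m * max (⟪F m, x⟫ - lam) 0 + b) ≠ Real.sign (h x)} := by
  obtain ⟨r, hr0, hr1, hr⟩ : ∃ r : ℝ, 0 < r ∧ 8 * r ≤ 1 ∧ (8 * r ≤ lam ∨ lam = 0) := by
    rcases hlam.eq_or_lt with h | h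
    · exact ⟨1 / 8, by norm_num, by norm_num, Or.inr h.symm⟩
    · refine ⟨min 1 lam / 8, by positivity, ?_, Or.inl ?_⟩
      · linarith [min_le_left 1 lam]
      · linarith [min_le_right 1 lam]
  have hV0 := shellSet_volume_pos d hd r hr0
  have hVt := shellSet_volume_fin d r
  refine ⟨volume.withDensity (totDens d r), ⟨?_⟩, totDens d r,
    fun x => (‖x‖ ^ 2 - 4 * r ^ 2) * (‖x‖ ^ 2 - 16 * r ^ 2), rfl, ?_, ?_, ?_⟩
  · rw [tot_apply]
    simp only [Set.preimage_univ, Set.inter_univ]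
    rw [show ∀ V : ℝ≥0∞, V + (V + V) = 3 * V from fun V => by ring]
    exact ENNReal.inv_mul_cancel (mul_ne_zero (by norm_num) hV0)
      (ENNReal.mul_ne_top (by norm_num) hVt)
  · intro x hx
    simp only [totDens, Pi.add_apply]
    rw [piece_zero, piece_zero, piece_zero] <;> first | linarith | simp
  · have := contDiff_norm_sq ℝ (E := EuclideanSpace ℝ (Fin d)) (n := ((⊤ : ℕ∞) : WithTop ℕ∞))
    exact (this.sub contDiff_const).mul (this.sub contDiff_const)
  · intro p _ F hF w b
    rw [tot_apply]
    set E : Set (EuclideanSpace ℝ (Fin d)) := {x | Real.sign (∑ m, w m * max (⟪F m, x⟫ - lam) 0 + b) ≠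
      Real.sign ((‖x‖ ^ 2 - 4 * r ^ 2) * (‖x‖ ^ 2 - 16 * r ^ 2))} with hE
    have hsub : shellSet d r ⊆ (shellSet d r ∩ (fun x => (1 : ℝ) • x) ⁻¹' E) ∪
        ((shellSet d r ∩ (fun x => (2 : ℝ) • x) ⁻¹' E) ∪
          (shellSet d r ∩ (fun x => (4 : ℝ) • x) ⁻¹' E)) := by
      intro x hx
      rw [← Set.inter_union_distrib_left, ← Set.inter_union_distrib_left]
      refine ⟨hx, ?_⟩
      by_contra hcon
      obtain ⟨G, hG⟩ := net_affine lam d r hr p F hF w x hx.2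
      simp only [hE, Set.mem_union, Set.mem_preimage, Set.mem_setOf_eq, not_or, not_not] at hcon
      obtain ⟨h1, h2, h4⟩ := hcon
      rw [hG 1 (by norm_num) (by norm_num)] at h1
      rw [hG 2 (by norm_num) (by norm_num)] at h2
      rw [hG 4 (by norm_num) (by norm_num)] at h4
      simp only [norm_smul, Real.norm_ofNat, norm_one] at h1 h2 h4
      have hlo : r ^ 2 < ‖x‖ ^ 2 := by gcongr; exact hx.1
      have hhi : ‖x‖ ^ 2 < (2 * r) ^ 2 := by gcongr; exact hx.2
      have h1' := sign_pos_iff' (mul_pos_of_neg_of_neg (by nlinarith) (by nlinarith)) h1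
      have h2' := sign_neg_iff' (mul_neg_of_pos_of_neg (by nlinarith) (by nlinarith)) h2
      have h4' := sign_pos_iff' (mul_pos (by nlinarith) (by nlinarith)) h4
      linarith
    have hle : volume (shellSet d r) ≤ _ := (measure_mono hsub).trans
      ((measure_union_le _ _).trans (add_le_add le_rfl (measure_union_le _ _)))
    refine le_trans ?_ (mul_le_mul_right hle _)
    rw [ENNReal.mul_inv (Or.inl (by norm_num)) (Or.inl (by norm_num)), mul_assoc,
      ENNReal.inv_mul_cancel hV0 hVt, mul_one, one_div]
    exact ENNReal.inv_le_inv.2 (by norm_num)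
end

section
/- For all real numbers a and b, if r is a random variable uniformly distributed on [0, 1], then P[sign(a r + b) ≠ sign(cos(2π r))] ≥ 1/4. -/
open MeasureTheory
open scoped ENNReal

lemma aux_interval (S : Set ℝ) (c : ℝ) (h0 : 0 ≤ c) (h1 : c + 1 / 4 ≤ 1)
    (h : ∀ r, c < r → r < c + 1 / 4 → r ∈ S) :
    (1 / 4 : ℝ≥0∞) ≤ volume.restrict (Set.Icc (0 : ℝ) 1) S := by
  have hsub : Set.Ioo c (c + 1 / 4) ⊆ S := fun r hr => h r hr.1 hr.2
  refine le_trans ?_ (measure_mono hsub)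
  have hs : Set.Ioo c (c + 1 / 4) ⊆ Set.Icc 0 1 :=
    fun r hr => ⟨by linarith [hr.1], by linarith [hr.2]⟩
  rw [Measure.restrict_apply measurableSet_Ioo, Set.inter_eq_left.2 hs, Real.volume_Ioo, add_sub_cancel_left,
    ENNReal.ofReal_div_of_pos (by norm_num)]
  simp

lemma aux_neg (x y : ℝ) (hx : x ≤ 0) (hy : 0 < y) : Real.sign x ≠ Real.sign y := by
  rw [Real.sign_of_pos hy]
  rcases hx.lt_or_eq with h | h
  · rw [Real.sign_of_neg h]; norm_num
  · rw [h, Real.sign_zero]; norm_num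

lemma aux_pos (x y : ℝ) (hx : 0 ≤ x) (hy : y < 0) : Real.sign x ≠ Real.sign y := by
  rw [Real.sign_of_neg hy]
  rcases hx.lt_or_eq with h | h
  · rw [Real.sign_of_pos h]; norm_num
  · rw [← h, Real.sign_zero]; norm_num

/-- For `r` uniformly distributed on `[0, 1]`, any affine function `a r + b`
disagrees in sign with `cos(2π r)` with probability at least `1/4`. -/
theorem affine_sign_disagrees_with_cos
    (a b : ℝ) :
    (1 / 4 : ℝ≥0∞) ≤ volume.restrict (Set.Icc (0 : ℝ) 1)
      {r : ℝ | Real.sign (a * r + b) ≠ Real.sign (Real.cos (2 * Real.pi * r))} := by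
  have hp := Real.pi_pos
  have hneg : ∀ r : ℝ, 1 / 4 < r → r < 3 / 4 → Real.cos (2 * Real.pi * r) < 0 := fun r h1 h2 =>
    Real.cos_neg_of_pi_div_two_lt_of_lt (by nlinarith) (by nlinarith)
  rcases le_total 0 (a * (1 / 2) + b) with hm | hm <;> rcases le_total 0 a with ha | ha
  · exact aux_interval _ (1 / 2) (by norm_num) (by norm_num) fun r h1 h2 =>
      aux_pos _ _ (by nlinarith) (hneg r (by linarith) (by linarith))
  · exact aux_interval _ (1 / 4) (by norm_num) (by norm_num) fun r h1 h2 =>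
      aux_pos _ _ (by nlinarith) (hneg r (by linarith) (by linarith))
  · exact aux_interval _ 0 (by norm_num) (by norm_num) fun r h1 h2 =>
      aux_neg _ _ (by nlinarith)
        (Real.cos_pos_of_mem_Ioo ⟨by nlinarith, by nlinarith⟩)
  · refine aux_interval _ (3 / 4) (by norm_num) (by norm_num) fun r h1 h2 =>
      aux_neg _ _ (by nlinarith) ?_
    rw [← Real.cos_sub_two_pi]
    exact Real.cos_pos_of_mem_Ioo ⟨by nlinarith, by nlinarith⟩
end

section
/- Fix λ > 0 and an integer d ≥ 1. Let u be uniformly distributed on the unit sphere S^{d−1} ⊂ ℝ^d, let r be uniformly distributed on (0, λ), independent of u, and set x = r u and h(x) = cos(π ‖x‖ / λ). Then for every integer p ≥ 1, every matrix F ∈ ℝ^{p×d} whose rows f_1, …, f_p satisfy ‖f_m‖ ≤ 1, every W = (w_1, …, w_p) ∈ ℝ^{1×p}, and every b ∈ ℝ, the network output ∑_{m=1}^p w_m max(⟨f_m, x⟩ − λ, 0) + b equals b almost surely, and P[sign(∑_{m=1}^p w_m max(⟨f_m, x⟩ − λ, 0) + b) ≠ sign(h(x))] ≥ 1/2. -/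
open MeasureTheory
open scoped RealInnerProductSpace ENNReal

/-- Positive-threshold case of the non-universality theorem.  Let `u` be
uniformly distributed on the unit sphere (its law is a probability measure on the sphere
invariant under every linear isometry of `ℝ^d`), let `r` be uniform on `(0, lam)` and
independent of `u`, and set `x = r • u`, `h(x) = cos(π ‖x‖ / lam)`.  Then every bias-free
two-layer network output `∑_m w_m max(⟨f_m, x⟩ − lam, 0) + b` with `‖f_m‖ ≤ 1` equals `b`
almost surely, and disagrees in sign with `h(x)` with probability at least `1/2`. -/
theorem positive_threshold_network_constant
    (lam : ℝ) (hlam : 0 < lam) (d : ℕ) (hd : 1 ≤ d)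
    {Ω : Type*} [MeasurableSpace Ω] (P : Measure Ω) [IsProbabilityMeasure P]
    (u : Ω → EuclideanSpace ℝ (Fin d)) (r : Ω → ℝ)
    (hu : Measurable u) (hr : Measurable r)
    (husphere : ∀ᵐ ω ∂P, ‖u ω‖ = 1)
    (huunif : ∀ g : EuclideanSpace ℝ (Fin d) ≃ₗᵢ[ℝ] EuclideanSpace ℝ (Fin d),
      Measure.map (fun ω => g (u ω)) P = Measure.map u P)
    (hrunif : Measure.map r P = (ENNReal.ofReal lam)⁻¹ • volume.restrict (Set.Ioo 0 lam))
    (hindep : ProbabilityTheory.IndepFun u r P)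
    (x : Ω → EuclideanSpace ℝ (Fin d)) (hx : ∀ ω, x ω = r ω • u ω)
    (h : EuclideanSpace ℝ (Fin d) → ℝ)
    (hh : ∀ v : EuclideanSpace ℝ (Fin d), h v = Real.cos (Real.pi * ‖v‖ / lam)) :
    ∀ p : ℕ, 1 ≤ p →
    ∀ F : Fin p → EuclideanSpace ℝ (Fin d), (∀ m, ‖F m‖ ≤ 1) →
    ∀ (w : Fin p → ℝ) (b : ℝ),
      (∀ᵐ ω ∂P, ∑ m, w m * max (⟪F m, x ω⟫ - lam) 0 + b = b) ∧
      (1 / 2 : ℝ≥0∞) ≤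
        P {ω | Real.sign (∑ m, w m * max (⟪F m, x ω⟫ - lam) 0 + b) ≠ Real.sign (h (x ω))} := by
  intro p _ F hF w b
  have hrI : ∀ᵐ ω ∂P, r ω ∈ Set.Ioo 0 lam := by
    have h1 : ∀ᵐ t ∂(Measure.map r P), t ∈ Set.Ioo 0 lam := by
      rw [hrunif]
      exact Measure.ae_smul_measure (ae_restrict_mem measurableSet_Ioo) _
    exact ae_of_ae_map hr.aemeasurable h1
  have hnorm : ∀ᵐ ω ∂P, ‖x ω‖ = r ω := by
    filter_upwards [hrI, husphere] with ω h1 h2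
    rw [hx, norm_smul, h2, mul_one, Real.norm_of_nonneg h1.1.le]
  have hconst : ∀ᵐ ω ∂P, ∑ m, w m * max (⟪F m, x ω⟫ - lam) 0 + b = b := by
    filter_upwards [hrI, hnorm] with ω h1 h2
    have : ∀ m, w m * max (⟪F m, x ω⟫ - lam) 0 = 0 := by
      intro m
      have h3 : ⟪F m, x ω⟫ ≤ ‖F m‖ * ‖x ω‖ := real_inner_le_norm _ _
      have h4 : ‖F m‖ * ‖x ω‖ ≤ 1 * ‖x ω‖ :=
        mul_le_mul_of_nonneg_right (hF m) (norm_nonneg _)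
      have h5 := h1.2
      rw [max_eq_right (by linarith), mul_zero]
    simp [this]
  refine ⟨hconst, ?_⟩
  have hhalf : ∀ a c : ℝ, 0 ≤ a → c ≤ lam → c - a = lam / 2 →
      P (r ⁻¹' Set.Ioo a c) = 1 / 2 := by
    intro a c ha hc hac
    rw [← Measure.map_apply hr measurableSet_Ioo, hrunif, Measure.smul_apply,
      Measure.restrict_apply measurableSet_Ioo,
      Set.inter_eq_left.mpr (Set.Ioo_subset_Ioo ha hc), Real.volume_Ioo, hac, smul_eq_mul,
      ← ENNReal.ofReal_inv_of_pos hlam, ← ENNReal.ofReal_mul (by positivity)]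
    have : lam⁻¹ * (lam / 2) = 1 / 2 := by field_simp
    rw [this, ENNReal.ofReal_div_of_pos (by norm_num)]
    simp
  rcases lt_or_ge 0 b with hb | hb
  · rw [← hhalf (lam / 2) lam (by linarith) le_rfl (by ring)]
    apply measure_mono_ae
    filter_upwards [hconst, hnorm] with ω h1 h2 h3
    have h3' : r ω ∈ Set.Ioo (lam / 2) lam := h3
    show Real.sign _ ≠ Real.sign _
    have hneg : Real.cos (Real.pi * r ω / lam) < 0 := by
      apply Real.cos_neg_of_pi_div_two_lt_of_lt
      · rw [lt_div_iff₀ hlam]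
        nlinarith [Real.pi_pos, h3'.1]
      · rw [div_lt_iff₀ hlam]
        nlinarith [Real.pi_pos, h3'.2]
    rw [h1, hh, h2, Real.sign_of_pos hb, Real.sign_of_neg hneg]
    norm_num
  · rw [← hhalf 0 (lam / 2) le_rfl (by linarith) (by ring)]
    apply measure_mono_ae
    filter_upwards [hconst, hnorm] with ω h1 h2 h3
    have h3' : r ω ∈ Set.Ioo 0 (lam / 2) := h3
    show Real.sign _ ≠ Real.sign _
    have hpos : 0 < Real.cos (Real.pi * r ω / lam) := by
      apply Real.cos_pos_of_mem_Ioo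
      constructor
      · have : 0 < Real.pi * r ω / lam := div_pos (mul_pos Real.pi_pos h3'.1) hlam
        linarith [Real.pi_pos]
      · rw [div_lt_iff₀ hlam]
        nlinarith [Real.pi_pos, h3'.2]
    rw [h1, hh, h2, Real.sign_of_pos hpos]
    rcases hb.lt_or_eq with hb | hb
    · rw [Real.sign_of_neg hb]
      norm_num
    · rw [hb, Real.sign_zero]
      norm_num
end
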